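/- arXiv:1104.1540 — 2 statements merged into one kernel-verified Lean document; each statement's English description precedes it below -/
import Mathlib

section
/- Let A be a Timed Büchi Automaton. Every infinite path in the simulation graph SG(A) starting from its initial node is an abstraction of a run of A. The same statement holds for SG^d(A) and SG^a(A). -/
/-!
The transitions of an infinite path of one of the three simulation graphs determine a sequence of
guards and resets. The abstraction operators are extensive, so any delays satisfying these guards
from the zero valuation yield a run whose valuations stay in the sets of the path; only the
feasibility of the infinite sequence of guards is at stake.

*Finite prefixes* (`exists_delays_prefix`). Only finitely many clocks are tested along a prefix, so
valuations are restricted to these. By induction, every valuation in a node of the path agrees, on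
its clocks of value at most `M` and with the other clocks staying above `M` (`Clip`), with a
valuation reachable by delays at most `M + 1`. Sets of reachable valuations are invariant under
circle maps, the strictly increasing maps of the line commuting with integer translations, that
fix `0`. Region-equivalent valuations differ, below `M`, by such a map, which handles
`closureR`; `closureD` is finer. For `approxZ` the point is that a valuation in the approximation
of a convex set `S` invariant under circle maps agrees with a member of `S` up to clipping
(`exists_clip_of_mem_approxZ`). Such an `S` need not be a zone, but it contains every point in the
relative interior of the integer difference bounds valid on it (`mem_of_relInt`): rounding shows
that the integer points within the bounds are endpoints of segments into `S`. A valuation that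
clips to no member of `S` is then separated from `S` by a convex union of diagonal regions
(`exists_separating`), by induction on faces.

*Compactness* (`exists_delays_of_prefixes`). Satisfaction of the guards depends only on integer
difference constraints, strict or not, between the times at which transitions are taken. Along an
ultrafilter the integer parts of these (bounded) times stabilise and their fractional parts are
totally preordered; realising this preorder on `ℕ` inside `[0, 1)` gives times satisfying all
guards at once (`exists_limit_times`), including strict ones, where a topological limit would fail.
-/

/-! ## Framework for Timed Büchi Automata -/

/-- Comparison operators `<, ≤, =, ≥, >` used in clock constraints. -/
inductive CmpOp where
  | lt | le | eq | ge | gt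

def CmpOp.sat : CmpOp → ℝ → ℝ → Prop
  | .lt, a, b => a < b
  | .le, a, b => a ≤ b
  | .eq, a, b => a = b
  | .ge, a, b => a ≥ b
  | .gt, a, b => a > b

/-- A clock valuation assigns a non-negative real to every clock. -/
abbrev ClockVal (X : Type) := X → NNReal

/-- An atomic clock constraint `x # c`. -/
structure AtomicConstraint (X : Type) where
  clock : X
  cmp : CmpOp
  bound : ℕ

/-- A guard is a finite conjunction of atomic constraints. -/
abbrev Guard (X : Type) := List (AtomicConstraint X)

def Guard.sat {X : Type} (g : Guard X) (v : ClockVal X) : Prop :=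
  ∀ c ∈ g, CmpOp.sat c.cmp (v c.clock : ℝ) (c.bound : ℝ)

/-- A transition `(q, g, R, q')` of a timed automaton. -/
structure TBATrans (Q X : Type) where
  src : Q
  guard : Guard X
  reset : Set X
  dst : Q

/-- A Timed Büchi Automaton with states `Q` and clocks `X`. -/
structure TBA (Q X : Type) where
  q0 : Q
  trans : Set (TBATrans Q X)
  acc : Set Q

/-- Time elapse: `(ν+δ)(x) = ν(x)+δ`. -/
def ClockVal.add {X : Type} (v : ClockVal X) (d : NNReal) : ClockVal X := fun x => v x + d

open Classical in
/-- `[R]ν` sets clocks in `R` to `0` and leaves others unchanged. -/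
noncomputable def resetVal {X : Type} (R : Set X) (v : ClockVal X) : ClockVal X :=
  fun x => if x ∈ R then 0 else v x

/-- The valuation assigning `0` to every clock. -/
def zeroVal (X : Type) : ClockVal X := fun _ => 0

/-- `(q,ν) →^{δ,t} (q',ν')`. -/
def TBA.Step {Q X : Type} (A : TBA Q X) (t : TBATrans Q X) (d : NNReal)
    (c c' : Q × ClockVal X) : Prop :=
  t ∈ A.trans ∧ t.src = c.1 ∧ t.dst = c'.1 ∧
    Guard.sat t.guard (ClockVal.add c.2 d) ∧ c'.2 = resetVal t.reset (ClockVal.add c.2 d)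

/-- A run of `A` given by its configurations, delays and transitions. -/
def IsRun {Q X : Type} (A : TBA Q X) (st : ℕ → Q × ClockVal X) (ds : ℕ → NNReal)
    (ts : ℕ → TBATrans Q X) : Prop :=
  st 0 = (A.q0, zeroVal X) ∧ ∀ i, A.Step (ts i) (ds i) (st i) (st (i + 1))

/-- The run visits accepting states infinitely often. -/
def BuchiRun {Q X : Type} (A : TBA Q X) (st : ℕ → Q × ClockVal X) : Prop :=
  {i | (st i).1 ∈ A.acc}.Infinite

/-- A sequence of delays is non-Zeno when its total duration is infinite. -/
def NonZeno (ds : ℕ → NNReal) : Prop := (∑' i, (ds i : ENNReal)) = ⊤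

def TBA.BoundsConsts {Q X : Type} (A : TBA Q X) (M : ℕ) : Prop :=
  ∀ t ∈ A.trans, ∀ c ∈ t.guard, c.bound ≤ M

/-- `M` is the maximal constant appearing in the guards of `A`
(`M = 0` when there is no constraint at all). -/
def TBA.IsMaxConst {Q X : Type} (A : TBA Q X) (M : ℕ) : Prop :=
  A.BoundsConsts M ∧ (M = 0 ∨ ∃ t ∈ A.trans, ∃ c ∈ t.guard, c.bound = M)

/-! ## Regions -/

/-- Region equivalence `ν ≅_M ν'`. -/
def RegEquiv {X : Type} (M : ℕ) (v v' : ClockVal X) : Prop :=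
  ∀ x y : X,
    (((M : ℝ) < (v x : ℝ)) ↔ ((M : ℝ) < (v' x : ℝ))) ∧
    ((v x : ℝ) ≤ M → ⌊(v x : ℝ)⌋ = ⌊(v' x : ℝ)⌋) ∧
    ((v x : ℝ) ≤ M → (Int.fract (v x : ℝ) = 0 ↔ Int.fract (v' x : ℝ) = 0)) ∧
    ((v x : ℝ) ≤ M → (v y : ℝ) ≤ M →
      (Int.fract (v x : ℝ) ≤ Int.fract (v y : ℝ) ↔
        Int.fract (v' x : ℝ) ≤ Int.fract (v' y : ℝ)))

/-- Diagonal region equivalence `ν ≅^d_M ν'`. -/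
def DRegEquiv {X : Type} (M : ℕ) (v v' : ClockVal X) : Prop :=
  (∀ x : X,
    (((M : ℝ) < (v x : ℝ)) ↔ ((M : ℝ) < (v' x : ℝ))) ∧
    ((v x : ℝ) ≤ M → ⌊(v x : ℝ)⌋ = ⌊(v' x : ℝ)⌋) ∧
    ((v x : ℝ) ≤ M → (Int.fract (v x : ℝ) = 0 ↔ Int.fract (v' x : ℝ) = 0))) ∧
  (∀ x y : X, ∀ c : ℤ, -(M : ℤ) < c → c < (M : ℤ) →
    ((v x : ℝ) - (v y : ℝ) ≤ (c : ℝ) ↔ (v' x : ℝ) - (v' y : ℝ) ≤ (c : ℝ)))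

/-- `r` is an equivalence class of the relation `E`. -/
def EqClass {X : Type} (E : ClockVal X → ClockVal X → Prop) (r : Set (ClockVal X)) : Prop :=
  ∃ v, r = {v' | E v v'}

/-- Nodes of region/simulation/zone graphs: a state paired with a set of valuations. -/
abbrev RNode (Q X : Type) := Q × Set (ClockVal X)

/-- A transition `(q,r) →^t (q',r')` of the region graph built on the equivalence `E`. -/
def RGTrans {Q X : Type} (A : TBA Q X) (E : ClockVal X → ClockVal X → Prop)
    (t : TBATrans Q X) (n n' : RNode Q X) : Prop :=
  EqClass E n.2 ∧ EqClass E n'.2 ∧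
    ∃ v ∈ n.2, ∃ d : NNReal, ∃ v' ∈ n'.2, A.Step t d (n.1, v) (n'.1, v')

def PreStable {Q X : Type} (A : TBA Q X) (t : TBATrans Q X) (n n' : RNode Q X) : Prop :=
  ∀ v ∈ n.2, ∃ v' ∈ n'.2, ∃ d : NNReal, A.Step t d (n.1, v) (n'.1, v')

def PostStable {Q X : Type} (A : TBA Q X) (t : TBATrans Q X) (n n' : RNode Q X) : Prop :=
  ∀ v' ∈ n'.2, ∃ v ∈ n.2, ∃ d : NNReal, A.Step t d (n.1, v) (n'.1, v')

/-- A progressive path: every clock is either eventually always above `M`,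
or is both reset and strictly positive infinitely often. -/
def Progressive {Q X : Type} (M : ℕ) (nodes : ℕ → RNode Q X) : Prop :=
  ∀ x : X,
    (∃ n : ℕ, ∀ i > n, ∀ v ∈ (nodes i).2, (M : ℝ) < (v x : ℝ)) ∨
    (∀ n : ℕ, (∃ i > n, ∀ v ∈ (nodes i).2, v x = 0) ∧
              (∃ j > n, ∀ v ∈ (nodes j).2, 0 < v x))

/-! ## Zones and abstraction operators -/

inductive ZoneConstraint (X : Type) where
  | single (x : X) (cmp : CmpOp) (c : ℕ)
  | diff (x y : X) (cmp : CmpOp) (c : ℕ)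

def ZoneConstraint.sat {X : Type} : ZoneConstraint X → ClockVal X → Prop
  | .single x cmp c, v => CmpOp.sat cmp (v x : ℝ) (c : ℝ)
  | .diff x y cmp c, v => CmpOp.sat cmp ((v x : ℝ) - (v y : ℝ)) (c : ℝ)

/-- A zone: a set of valuations definable by a finite conjunction of constraints
`x # c` or `x − y # c`. -/
def IsZone {X : Type} (Z : Set (ClockVal X)) : Prop :=
  ∃ l : List (ZoneConstraint X), Z = {v | ∀ c ∈ l, ZoneConstraint.sat c v}

/-- `Closure_M(Z)`: smallest union of regions containing `Z`. -/
def closureR {X : Type} (M : ℕ) (Z : Set (ClockVal X)) : Set (ClockVal X) :=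
  {v' | ∃ v ∈ Z, RegEquiv M v v'}

/-- `Closure^d_M(Z)`: smallest union of d-regions containing `Z`. -/
def closureD {X : Type} (M : ℕ) (Z : Set (ClockVal X)) : Set (ClockVal X) :=
  {v' | ∃ v ∈ Z, DRegEquiv M v v'}

/-- `S` is a union of equivalence classes of `E`. -/
def UnionOfClasses {X : Type} (E : ClockVal X → ClockVal X → Prop)
    (S : Set (ClockVal X)) : Prop :=
  ∀ v ∈ S, ∀ v', E v v' → v' ∈ S

/-- Convexity for sets of clock valuations. -/
def ConvexVal {X : Type} (S : Set (ClockVal X)) : Prop :=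
  ∀ u ∈ S, ∀ w ∈ S, ∀ θ : NNReal, θ ≤ 1 →
    (fun x => θ * u x + (1 - θ) * w x) ∈ S

/-- `Approx_M(Z)`: smallest convex union of d-regions containing `Z`. -/
def approxZ {X : Type} (M : ℕ) (Z : Set (ClockVal X)) : Set (ClockVal X) :=
  ⋂₀ {S | Z ⊆ S ∧ ConvexVal S ∧ UnionOfClasses (DRegEquiv M) S}

/-! ## Simulation graphs and the zone graph -/

/-- `{ν' | ∃ ν ∈ S, δ ≥ 0, (q,ν) →^{δ,t} (q',ν')}`. -/
def postSet {Q X : Type} (A : TBA Q X) (t : TBATrans Q X) (q : Q)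
    (S : Set (ClockVal X)) (q' : Q) : Set (ClockVal X) :=
  {v' | ∃ v ∈ S, ∃ d : NNReal, A.Step t d (q, v) (q', v')}

/-- Transition of the simulation graph built with abstraction operator `op`. -/
def SGTrans {Q X : Type} (A : TBA Q X) (op : Set (ClockVal X) → Set (ClockVal X))
    (t : TBATrans Q X) (n n' : RNode Q X) : Prop :=
  (postSet A t n.1 n.2 n'.1).Nonempty ∧ n'.2 = op (postSet A t n.1 n.2 n'.1)

/-- Initial node `(q0, {ν0})` of the simulation/zone graphs. -/
def ZGInit {Q X : Type} (A : TBA Q X) : RNode Q X := (A.q0, {zeroVal X})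

/-- A step of the zone graph `ZG^a(A)` (simulation graph with `Approx_M`). -/
def ZGStep {Q X : Type} (A : TBA Q X) (M : ℕ) (n n' : RNode Q X) : Prop :=
  ∃ t, SGTrans A (approxZ M) t n n'

/-- Nodes of `ZG^a(A)` reachable from the initial node. -/
def ZGReach {Q X : Type} (A : TBA Q X) (M : ℕ) : Set (RNode Q X) :=
  {n | Relation.ReflTransGen (ZGStep A M) (ZGInit A) n}

/-! ## Bounded, lower-bounded, reset and zero-checked clocks -/

/-- Clock `x` is bounded by transition `t` taken from the set of valuations `Z`. -/
def BoundsClock {Q X : Type} (t : TBATrans Q X) (Z : Set (ClockVal X)) (x : X) : Prop :=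
  ∃ c : ℕ, ∀ v ∈ Z, ∀ d : NNReal, Guard.sat t.guard (ClockVal.add v d) →
    ((ClockVal.add v d) x : ℝ) ≤ c

/-- The guard of `t`, taken from `Z`, implies `x ≥ 1`. -/
def LowerBoundsClock {Q X : Type} (t : TBATrans Q X) (Z : Set (ClockVal X)) (x : X) : Prop :=
  ∀ v ∈ Z, ∀ d : NNReal, Guard.sat t.guard (ClockVal.add v d) →
    (1 : ℝ) ≤ ((ClockVal.add v d) x : ℝ)

/-- Transition `t` taken from `Z` is a zero-check. -/
def ZeroCheck {Q X : Type} (t : TBATrans Q X) (Z : Set (ClockVal X)) : Prop :=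
  ∃ x : X, ∀ v ∈ Z, ∀ d : NNReal, Guard.sat t.guard (ClockVal.add v d) →
    (ClockVal.add v d) x = 0

/-- A path of the zone graph is blocked if some clock is bounded infinitely often
but reset only finitely often. -/
def ZBlocked {Q X : Type} (nodes : ℕ → RNode Q X) (ts : ℕ → TBATrans Q X) : Prop :=
  ∃ x : X, {i | BoundsClock (ts i) (nodes i).2 x}.Infinite ∧
           {i | x ∈ (ts i).reset}.Finite

/-! ## The guessing zone graph -/

/-- Nodes `(q, Z, Y)` of the guessing zone graph. -/
abbrev GNode (Q X : Type) := Q × Set (ClockVal X) × Set X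

/-- Transitions of `GZG^a(A)`: `some t` is an action transition,
`none` is the auxiliary letter `τ`. -/
def GZGTrans {Q X : Type} (A : TBA Q X) (M : ℕ) :
    Option (TBATrans Q X) → GNode Q X → GNode Q X → Prop
  | some t, n, n' =>
      SGTrans A (approxZ M) t (n.1, n.2.1) (n'.1, n'.2.1) ∧
      n'.2.2 = n.2.2 ∪ t.reset ∧
      ∃ v ∈ n.2.1, ∃ d : NNReal, ∃ v' ∈ n'.2.1,
        (∀ x, x ∉ n.2.2 → 0 < (ClockVal.add v d) x) ∧
        A.Step t d (n.1, v) (n'.1, v')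
  | none, n, n' => n'.1 = n.1 ∧ n'.2.1 = n.2.1 ∧ (n'.2.2 = (∅ : Set X) ∨ n'.2.2 = n.2.2)

/-- Initial node `(q0, {ν0}, X)` of `GZG^a(A)`. -/
def GZGInit {Q X : Type} (A : TBA Q X) : GNode Q X := (A.q0, {zeroVal X}, Set.univ)

def GZGStep {Q X : Type} (A : TBA Q X) (M : ℕ) (n n' : GNode Q X) : Prop :=
  ∃ l, GZGTrans A M l n n'

/-- Nodes of `GZG^a(A)` reachable from the initial node. -/
def GZGReach {Q X : Type} (A : TBA Q X) (M : ℕ) : Set (GNode Q X) :=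
  {n | Relation.ReflTransGen (GZGStep A M) (GZGInit A) n}

/-- A path of the guessing zone graph is blocked if some clock is bounded by
infinitely many of its transitions but reset by only finitely many. -/
def GBlocked {Q X : Type} (nodes : ℕ → GNode Q X)
    (labels : ℕ → Option (TBATrans Q X)) : Prop :=
  ∃ x : X,
    {i | ∃ t, labels i = some t ∧ BoundsClock t (nodes i).2.1 x}.Infinite ∧
    {i | ∃ t, labels i = some t ∧ x ∈ t.reset}.Finite

/-! ## Clock orders -/

/-- `Z` orders clocks. -/
def OrdersClocks {X : Type} (Z : Set (ClockVal X)) : Prop :=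
  ∀ x y : X, (∀ v ∈ Z, v x ≤ v y) ∨ (∀ v ∈ Z, v y ≤ v x)

/-- `Y` respects the order given by `Z`: it is downward closed w.r.t. it. -/
def RespectsOrder {X : Type} (Z : Set (ClockVal X)) (Y : Set X) : Prop :=
  ∀ y ∈ Y, ∀ x : X, (∀ v ∈ Z, v x ≤ v y) → x ∈ Y

/-! ## Strongly connected components -/

def StepWithin {N : Type} (Γ : Set N) (step : N → N → Prop) (a b : N) : Prop :=
  a ∈ Γ ∧ b ∈ Γ ∧ step a b

/-- `Γ` is an SCC of the graph with edge relation `step`: every node of `Γ` is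
reachable from every other node of `Γ` within `Γ`. -/
def IsSCC {N : Type} (step : N → N → Prop) (Γ : Set N) : Prop :=
  Γ.Nonempty ∧ ∀ a ∈ Γ, ∀ b ∈ Γ, Relation.ReflTransGen (StepWithin Γ step) a b

/-- `U_Γ`: clocks bounded by some transition of the SCC `Γ` of `GZG^a(A)`. -/
def GZGBoundedClocks {Q X : Type} (A : TBA Q X) (M : ℕ) (Γ : Set (GNode Q X)) : Set X :=
  {x | ∃ n ∈ Γ, ∃ n' ∈ Γ, ∃ t, GZGTrans A M (some t) n n' ∧ BoundsClock t n.2.1 x}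

/-- `R_Γ`: clocks reset by some transition of the SCC `Γ` of `GZG^a(A)`. -/
def GZGResetClocks {Q X : Type} (A : TBA Q X) (M : ℕ) (Γ : Set (GNode Q X)) : Set X :=
  {x | ∃ n ∈ Γ, ∃ n' ∈ Γ, ∃ t, GZGTrans A M (some t) n n' ∧ x ∈ t.reset}

/-! ## The strongly non-Zeno construction -/

def liftConstraint {X : Type} (c : AtomicConstraint X) : AtomicConstraint (Option X) :=
  ⟨some c.clock, c.cmp, c.bound⟩

def liftGuard {X : Type} (g : Guard X) : Guard (Option X) := g.map liftConstraint

/-- `SNZ(A)`: a fresh clock `z` (`none`) is added; every accepting state `a` is split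
into an accepting copy `a1` (`Sum.inr a`) reachable only with `z ≥ 1` and resetting `z`,
and a non-accepting copy `a2` (`Sum.inl a`). -/
def SNZ {Q X : Type} (A : TBA Q X) : TBA (Q ⊕ Q) (Option X) where
  q0 := Sum.inl A.q0
  trans :=
    {t' | ∃ t ∈ A.trans,
        t' = ⟨Sum.inl t.src, liftGuard t.guard, some '' t.reset, Sum.inl t.dst⟩} ∪
    {t' | ∃ t ∈ A.trans, t.dst ∈ A.acc ∧
        t' = ⟨Sum.inl t.src, ⟨none, CmpOp.ge, 1⟩ :: liftGuard t.guard,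
              insert none (some '' t.reset), Sum.inr t.dst⟩} ∪
    {t' | ∃ a ∈ A.acc, t' = ⟨Sum.inr a, [], ∅, Sum.inl a⟩}
  acc := Sum.inr '' A.acc

/-! ## Trapped runs and the restricted guessing zone graph -/

/-- A run of `A` is trapped in the SCC `Γ` of `ZG^a(A)`: some suffix of the run
instantiates a path lying within `Γ`. -/
def TrappedIn {Q X : Type} (A : TBA Q X) (M : ℕ) (Γ : Set (RNode Q X))
    (st : ℕ → Q × ClockVal X) (ts : ℕ → TBATrans Q X) : Prop :=
  ∃ m : ℕ, ∃ nodes : ℕ → RNode Q X,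
    (∀ i, nodes i ∈ Γ) ∧
    (∀ i, SGTrans A (approxZ M) (ts (m + i)) (nodes i) (nodes (i + 1))) ∧
    (∀ i, (st (m + i)).1 = (nodes i).1 ∧ (st (m + i)).2 ∈ (nodes i).2)

/-- Steps of `GZG^a(A)` whose endpoints project into `Γ`. -/
def GZGRestStep {Q X : Type} (A : TBA Q X) (M : ℕ) (Γ : Set (RNode Q X))
    (g g' : GNode Q X) : Prop :=
  (g.1, g.2.1) ∈ Γ ∧ (g'.1, g'.2.1) ∈ Γ ∧ GZGStep A M g g'

/-- Nodes of `GZG^a_{|Γ}(A)`: reachable from `(q^Γ, Z^Γ, X)` via steps projecting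
into `Γ`. -/
def GZGRestNodes {Q X : Type} (A : TBA Q X) (M : ℕ) (Γ : Set (RNode Q X))
    (root : RNode Q X) : Set (GNode Q X) :=
  {g | Relation.ReflTransGen (GZGRestStep A M Γ) (root.1, root.2, Set.univ) g}

/-! ### Circle maps and sets invariant under them -/

/-- Strictly increasing maps of the real line commuting with the integer translations. -/
structure CircMap (φ : ℝ → ℝ) : Prop where
  mono : StrictMono φ
  add_one : ∀ t, φ (t + 1) = φ t + 1

/-- `Z` is invariant under every circle map applied coordinatewise. -/
def CircInv {V : Type} (Z : Set (V → ℝ)) : Prop :=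
  ∀ φ, CircMap φ → ∀ a ∈ Z, (fun i => φ (a i)) ∈ Z

/-- The integer difference bound `z i - z j ≤ c` holds on all of `Z`. -/
def Vld {V : Type} (Z : Set (V → ℝ)) (i j : V) (c : ℤ) : Prop :=
  ∀ z ∈ Z, z i - z j ≤ c

/-- The value `d` respects, for the difference of the coordinates `i` and `j`, every integer
bound valid on `Z`, and attains such a bound only if it is an equality throughout `Z`. -/
def RelInt {V : Type} (Z : Set (V → ℝ)) (i j : V) (d : ℝ) : Prop :=
  ∀ c : ℤ, Vld Z i j c → d < c ∨ (d = c ∧ ∀ z ∈ Z, z i - z j = c)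

/-- `p` is the endpoint of a segment into `Z` all of whose other points lie in `Z`. -/
def Radial {V : Type} (Z : Set (V → ℝ)) (p : V → ℝ) : Prop :=
  ∃ b ∈ Z, ∀ ε : ℝ, 0 < ε → ε ≤ 1 → (fun i => (1 - ε) * p i + ε * b i) ∈ Z

section IntegerPoints

open Filter Topology

variable {V : Type} {Z : Set (V → ℝ)}

lemma exists_least_vld (hne : Z.Nonempty) {i j : V} {c : ℤ} (h : Vld Z i j c) :
    ∃ w : ℤ, Vld Z i j w ∧ ∀ c, Vld Z i j c → w ≤ c := by
  obtain ⟨z, hz⟩ := hne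
  have := Int.exists_least_of_bdd (P := fun c => Vld Z i j c)
    ⟨⌊z i - z j⌋, fun c hc => Int.floor_le_iff.2 (by linarith [hc z hz])⟩ ⟨c, h⟩
  exact this

/-- Moving slightly away from a point of `Z` does not violate the valid bounds. -/
lemma RelInt.push {i j : V} {d : ℝ} (h : RelInt Z i j d) {z : V → ℝ} (hz : z ∈ Z) :
    ∀ᶠ η in 𝓝[>] (0 : ℝ), ∀ c : ℤ, Vld Z i j c → d - η * (z i - z j - d) ≤ c := by
  by_cases hc : ∃ c, Vld Z i j c
  · obtain ⟨c, hc⟩ := hc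
    obtain ⟨w, hw, hmin⟩ := exists_least_vld ⟨z, hz⟩ hc
    rcases h w hw with h1 | ⟨h1, h2⟩
    · have ht : Tendsto (fun η : ℝ => d - η * (z i - z j - d)) (𝓝[>] 0) (𝓝 d) := by
        have : Continuous (fun η : ℝ => d - η * (z i - z j - d)) := by fun_prop
        have := this.tendsto 0
        simp only [zero_mul, sub_zero] at this
        exact this.mono_left nhdsWithin_le_nhds
      filter_upwards [ht.eventually_lt_const h1] with η hη c hc
      have : (w : ℝ) ≤ c := by exact_mod_cast hmin c hc
      linarith
    · refine Eventually.of_forall fun η c hc => ?_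
      have : (w : ℝ) ≤ c := by exact_mod_cast hmin c hc
      rw [h2 z hz, ← h1]; simp; linarith
  · exact Eventually.of_forall fun η c hc' => (hc ⟨c, hc'⟩).elim

lemma CircMap.add_int {φ : ℝ → ℝ} (h : CircMap φ) (t : ℝ) (n : ℤ) : φ (t + n) = φ t + n := by
  induction n using Int.induction_on with
  | zero => simp
  | succ k ih => push_cast at *; rw [← add_assoc, h.add_one, ih]; ring
  | pred k ih =>
    have := h.add_one (t + ((-(k : ℤ) - 1 : ℤ) : ℝ))
    push_cast at *
    rw [show t + (-(k : ℝ) - 1) + 1 = t + -k by ring, ih] at this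
    linarith

lemma circMap_translate (s : ℝ) : CircMap (fun t => t + s) :=
  ⟨fun a b h => by simpa using h, fun t => by ring⟩

lemma Radial.of_mem {p : V → ℝ} (h : p ∈ Z) : Radial Z p := by
  refine ⟨p, h, fun ε _ _ => ?_⟩
  convert h using 1
  ext i; ring

lemma Radial.combo (hcv : Convex ℝ Z) {p q : V → ℝ} (hp : Radial Z p) (hq : Radial Z q)
    {s t : ℝ} (hs : 0 ≤ s) (ht : 0 ≤ t) (hst : s + t = 1) :
    Radial Z (fun i => s * p i + t * q i) := by
  obtain ⟨b, hb, h⟩ := hp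
  obtain ⟨b', hb', h'⟩ := hq
  refine ⟨s • b + t • b', hcv hb hb' hs ht hst, fun ε h0 h1 => ?_⟩
  convert hcv (h ε h0 h1) (h' ε h0 h1) hs ht hst using 1
  ext i; simp; ring

lemma Radial.translate (hinv : CircInv Z) {p : V → ℝ} (hp : Radial Z p) (s : ℝ) :
    Radial Z (fun i => p i + s) := by
  obtain ⟨b, hb, h⟩ := hp
  refine ⟨_, hinv _ (circMap_translate s) b hb, fun ε h0 h1 => ?_⟩
  convert hinv _ (circMap_translate s) _ (h ε h0 h1) using 1
  ext i; ring

lemma circMap_squash {η : ℝ} (h0 : 0 < η) (h1 : η ≤ 1) (s : ℝ) :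
    CircMap (fun t => (1 - η) * ⌊t + s⌋ + η * t) := by
  constructor
  · intro a b hab
    have h : (⌊a + s⌋ : ℝ) ≤ ⌊b + s⌋ := by exact_mod_cast Int.floor_mono (by linarith)
    have := mul_le_mul_of_nonneg_left h (sub_nonneg.2 h1)
    have := mul_lt_mul_of_pos_left hab h0
    simp only
    linarith
  · intro t
    have : t + 1 + s = t + s + 1 := by ring
    simp only [this, Int.floor_add_one]
    push_cast; ring

/-- Rounding: squashing the circle onto the integer points pushes a radial point to the
integer point obtained by rounding its coordinates simultaneously. -/
lemma Radial.round [Finite V] (hinv : CircInv Z) {a : V → ℝ} (ha : Radial Z a)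
    {s : ℝ} (hs : ∀ i, a i + s ≠ ⌊a i + s⌋) : Radial Z (fun i => (⌊a i + s⌋ : ℝ)) := by
  obtain ⟨b, hb, h⟩ := ha
  have hev : ∀ᶠ ε in 𝓝[>] (0 : ℝ), ∀ i, ⌊(1 - ε) * a i + ε * b i + s⌋ = ⌊a i + s⌋ := by
    rw [eventually_all]
    intro i
    have ht : Tendsto (fun ε : ℝ => (1 - ε) * a i + ε * b i + s) (𝓝[>] 0) (𝓝 (a i + s)) := by
      have : Continuous (fun ε : ℝ => (1 - ε) * a i + ε * b i + s) := by fun_prop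
      have := this.tendsto 0
      simp only [zero_mul, sub_zero, one_mul, add_zero] at this
      exact this.mono_left nhdsWithin_le_nhds
    filter_upwards [ht.eventually_lt_const (Int.lt_floor_add_one _),
      ht.eventually_const_lt (lt_of_le_of_ne (Int.floor_le _) (hs i).symm)] with ε h1 h2
    rw [Int.floor_eq_iff]
    exact ⟨h2.le, h1⟩
  have h1 : ∀ᶠ ε in 𝓝[>] (0 : ℝ), ε ≤ 1 :=
    Filter.Eventually.filter_mono nhdsWithin_le_nhds (eventually_le_nhds one_pos)
  obtain ⟨ε, hfl, h1, h0⟩ := (hev.and (h1.and self_mem_nhdsWithin)).exists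
  refine ⟨_, h ε h0 h1, fun η h0' h1' => ?_⟩
  convert hinv _ (circMap_squash h0' h1' s) _ (h ε h0 h1) using 1
  ext i
  simp only [hfl]

/-- The radial integer points. -/
def RadInt (Z : Set (V → ℝ)) (p : V → ℤ) : Prop := Radial Z (fun i => (p i : ℝ))

lemma RadInt.translate (hinv : CircInv Z) {p : V → ℤ} (hp : RadInt Z p) (s : ℤ) :
    RadInt Z (fun i => p i + s) := by
  have := Radial.translate hinv hp s
  simpa [RadInt] using this

lemma exists_abs_bound [Finite V] (p q : V → ℤ) : ∃ K : ℕ, ∀ i, |q i - p i| ≤ K := by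
  obtain ⟨B, hB⟩ := (Set.finite_range (fun i => |q i - p i|)).bddAbove
  refine ⟨B.toNat, fun i => ?_⟩
  have := hB ⟨i, rfl⟩
  simp only at this
  omega

/-- One unit step from `p` towards `q` on the coordinates where `p` is smaller: the point
close to `p` on the segment from `p` to `q` is rounded so that every strict increase counts as
a full unit. -/
lemma RadInt.step [Finite V] (hcv : Convex ℝ Z) (hinv : CircInv Z) {p q : V → ℤ}
    (hp : RadInt Z p) (hq : RadInt Z q) :
    RadInt Z (fun i => if p i < q i then p i + 1 else p i) := by
  obtain ⟨K, hK⟩ := exists_abs_bound p q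
  have hK0 : (0 : ℝ) < K + 1 := by positivity
  set t : ℝ := 1 / (K + 1) with ht
  have ht0 : 0 < t := by positivity
  have htK : t * (K + 1) = 1 := by rw [ht]; field_simp
  have ht1 : t ≤ 1 := by nlinarith [(Nat.cast_nonneg K : (0 : ℝ) ≤ K)]
  have hc := Radial.combo hcv hp hq (sub_nonneg.2 ht1) ht0.le (by ring)
  have hfl : ∀ i, (if p i < q i then p i + 1 else p i : ℤ) <
        ((1 - t) * p i + t * q i + (1 - t / 2) : ℝ) ∧
      ((1 - t) * p i + t * q i + (1 - t / 2) : ℝ) <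
        ((if p i < q i then p i + 1 else p i : ℤ) : ℝ) + 1 := by
    intro i
    have hi := abs_le.1 (hK i)
    have h1 : -(K : ℝ) ≤ (q i : ℝ) - p i := by exact_mod_cast hi.1
    have h2 : (q i : ℝ) - p i ≤ K := by exact_mod_cast hi.2
    have h3 := mul_le_mul_of_nonneg_left h1 ht0.le
    have h4 := mul_le_mul_of_nonneg_left h2 ht0.le
    split_ifs with h
    · have h5 : (1 : ℝ) ≤ (q i : ℝ) - p i := by
        have : 1 ≤ q i - p i := by omega
        exact_mod_cast this
      have h6 := mul_le_mul_of_nonneg_left h5 ht0.le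
      push_cast
      constructor <;> nlinarith
    · have h5 : (q i : ℝ) - p i ≤ 0 := by
        have : q i - p i ≤ 0 := by omega
        exact_mod_cast this
      have h6 := mul_le_mul_of_nonneg_left h5 ht0.le
      constructor <;> nlinarith
  have hfl' : ∀ i, ⌊((1 - t) * p i + t * q i + (1 - t / 2) : ℝ)⌋ =
      if p i < q i then p i + 1 else p i := fun i =>
    Int.floor_eq_iff.2 ⟨(hfl i).1.le, (hfl i).2⟩
  have := Radial.round hinv hc (s := 1 - t / 2) (fun i => by
    rw [hfl' i]; exact (hfl i).1.ne')
  simp only [hfl'] at this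
  exact this

/-- Iterated unit steps from `p` towards `q`, stopped at `q`. -/
lemma RadInt.climb [Finite V] (hcv : Convex ℝ Z) (hinv : CircInv Z) {p q : V → ℤ}
    (hp : RadInt Z p) (hq : RadInt Z q) (k : ℕ) :
    RadInt Z (fun i => max (p i) (min (p i + k) (q i))) := by
  induction k with
  | zero => convert hp using 1; ext i; simp
  | succ k ih =>
    convert RadInt.step hcv hinv ih hq using 1
    ext i
    push_cast
    split_ifs with h <;> omega

lemma RadInt.sup [Finite V] (hcv : Convex ℝ Z) (hinv : CircInv Z) {p q : V → ℤ}
    (hp : RadInt Z p) (hq : RadInt Z q) : RadInt Z (p ⊔ q) := by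
  obtain ⟨K, hK⟩ := exists_abs_bound p q
  convert RadInt.climb hcv hinv hp hq K using 1
  ext i
  have := abs_le.1 (hK i)
  simp only [Pi.sup_apply]
  omega

lemma RadInt.inf [Finite V] (hcv : Convex ℝ Z) (hinv : CircInv Z) {p q : V → ℤ}
    (hp : RadInt Z p) (hq : RadInt Z q) : RadInt Z (p ⊓ q) := by
  obtain ⟨K, hK⟩ := exists_abs_bound p q
  -- climbing from `p - K`, which lies below `q`, towards `q` for `K` steps stops at `min p q`
  convert RadInt.climb hcv hinv (RadInt.translate hinv hp (-K)) hq K using 1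
  ext i
  have := abs_le.1 (hK i)
  simp only [Pi.inf_apply]
  omega

lemma eventually_sub_not_int (r : ℝ) : ∀ᶠ σ in 𝓝[>] (0 : ℝ), r - σ ≠ ⌊r - σ⌋ := by
  have h : (0 : ℝ) < r - (⌈r⌉ - 1) := by linarith [Int.ceil_lt_add_one r]
  have : ∀ᶠ σ in 𝓝[>] (0 : ℝ), σ < r - (⌈r⌉ - 1) :=
    Filter.Eventually.filter_mono nhdsWithin_le_nhds (eventually_lt_nhds h)
  filter_upwards [this, self_mem_nhdsWithin] with σ h1 h2 h3
  have h2 : 0 < σ := h2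
  have h4 : ⌈r⌉ - 1 < ⌊r - σ⌋ := by
    have : ((⌈r⌉ - 1 : ℤ) : ℝ) < ⌊r - σ⌋ := by rw [← h3]; push_cast; linarith
    exact_mod_cast this
  have h5 : ⌊r - σ⌋ < ⌈r⌉ := by
    rw [Int.lt_ceil]; rw [← h3]; linarith
  omega

/-- A radial integer point matching `p` at `i` and below it at `j`: a member of `Z` whose
difference of the coordinates `i` and `j` exceeds `p i - p j - 1` is rounded, translated so
that its coordinate `j` lies just below an integer. -/
lemma exists_radInt_pair [Finite V] (hinv : CircInv Z) {p : V → ℤ}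
    (hp : ∀ i j c, Vld Z i j c → p i - p j ≤ c) (i j : V) :
    ∃ z, RadInt Z z ∧ z i = p i ∧ z j ≤ p j := by
  obtain ⟨b, hb, hgt⟩ : ∃ b ∈ Z, ((p i - p j - 1 : ℤ) : ℝ) < b i - b j := by
    by_contra! hcon
    have := hp i j _ hcon
    omega
  push_cast at hgt
  have e1 : ∀ᶠ σ in 𝓝[>] (0 : ℝ), ∀ k, (1 - b j + b k) - σ ≠ ⌊(1 - b j + b k) - σ⌋ :=
    eventually_all.2 fun k => eventually_sub_not_int _
  have e2 : ∀ᶠ σ in 𝓝[>] (0 : ℝ), σ < b i - b j - (p i - p j - 1) :=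
    Filter.Eventually.filter_mono nhdsWithin_le_nhds (eventually_lt_nhds (by linarith))
  have e3 : ∀ᶠ σ in 𝓝[>] (0 : ℝ), σ < 1 :=
    Filter.Eventually.filter_mono nhdsWithin_le_nhds (eventually_lt_nhds one_pos)
  obtain ⟨σ, h1, h2, h3, h4⟩ := (e1.and (e2.and (e3.and self_mem_nhdsWithin))).exists
  have h4 : 0 < σ := h4
  have hr : ∀ k, b k + (1 - σ - b j) = (1 - b j + b k) - σ := fun k => by ring
  have hq : RadInt Z (fun k => ⌊b k + (1 - σ - b j)⌋) :=
    Radial.round hinv (Radial.of_mem hb) (fun k => by rw [hr]; exact h1 k)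
  refine ⟨_, RadInt.translate hinv hq (p i - ⌊b i + (1 - σ - b j)⌋), by simp, ?_⟩
  have f1 : ⌊b j + (1 - σ - b j)⌋ = 0 := by
    rw [Int.floor_eq_iff]; constructor <;> push_cast <;> linarith
  have f2 : p i - p j ≤ ⌊b i + (1 - σ - b j)⌋ := by
    rw [Int.le_floor]; push_cast; linarith
  simp only [f1]
  omega

/-- An integer point respecting the valid bounds is radial: it is the supremum over `i` of
infima over `j` of the points of `exists_radInt_pair`. -/
lemma radInt_of_valid [Finite V] [Nonempty V] (hcv : Convex ℝ Z) (hinv : CircInv Z) {p : V → ℤ}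
    (hp : ∀ i j c, Vld Z i j c → p i - p j ≤ c) : RadInt Z p := by
  have := Fintype.ofFinite V
  have key : ∀ i, ∃ z, RadInt Z z ∧ z i = p i ∧ z ≤ p := by
    intro i
    choose f hf hfi hfj using fun j => exists_radInt_pair hinv hp i j
    refine ⟨Finset.univ.inf' Finset.univ_nonempty f,
      Finset.inf'_induction _ _ (fun a ha b hb => RadInt.inf hcv hinv ha hb)
        (fun j _ => hf j), ?_, ?_⟩
    · rw [Finset.inf'_apply]; simp [hfi]
    · intro j
      rw [Finset.inf'_apply]
      exact (Finset.inf'_le _ (Finset.mem_univ j)).trans (hfj j)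
  choose g hg hgi hle using key
  have : RadInt Z (Finset.univ.sup' Finset.univ_nonempty g) :=
    Finset.sup'_induction _ _ (fun a ha b hb => RadInt.sup hcv hinv ha hb) (fun j _ => hg j)
  convert this using 1
  ext i
  rw [Finset.sup'_apply]
  apply le_antisymm
  · rw [← hgi i]; exact Finset.le_sup' (fun j => g j i) (Finset.mem_univ i)
  · exact Finset.sup'_le _ _ fun j _ => hle j i

/-- A real point is the average over `t ∈ [0,1]` of its roundings `⌈a - t⌉`. -/
lemma mem_convexHull_ceil [Finite V] (a : V → ℝ) :
    a ∈ convexHull ℝ (Set.range fun t : Set.Ioo (0 : ℝ) 1 => fun i => (⌈a i - t⌉ : ℝ)) := by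
  have := Fintype.ofFinite V
  set C := Set.range fun t : Set.Ioo (0 : ℝ) 1 => fun i => (⌈a i - t⌉ : ℝ) with hC
  have hceil : ∀ t ∈ Set.Ioo (0 : ℝ) 1, ∀ x : ℝ,
      (⌈x - t⌉ : ℝ) = ⌊x⌋ + (Set.Iio (Int.fract x)).indicator (fun _ => (1 : ℝ)) t := by
    intro t ht x
    have hx := Int.floor_add_fract x
    have h0 := Int.fract_nonneg x
    have h1 := Int.fract_lt_one x
    obtain ⟨ht0, ht1⟩ := ht
    by_cases h : t < Int.fract x
    · have : ⌈x - t⌉ = ⌊x⌋ + 1 := by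
        rw [Int.ceil_eq_iff]; push_cast; constructor <;> linarith
      rw [this, Set.indicator_of_mem (by exact h)]; push_cast; rfl
    · have : ⌈x - t⌉ = ⌊x⌋ := by
        rw [Int.ceil_eq_iff]; push Not at h; constructor <;> linarith
      rw [this, Set.indicator_of_notMem (by exact h)]; simp
  have hfin : C.Finite := by
    have h2 : (Set.univ.pi fun i : V => ({(⌊a i⌋ : ℝ), (⌊a i⌋ : ℝ) + 1} : Set ℝ)).Finite :=
      Set.Finite.pi fun i => by simp
    refine h2.subset ?_
    rintro _ ⟨t, rfl⟩ i _
    simp only [hceil t t.2 (a i)]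
    by_cases h : (t : ℝ) ∈ Set.Iio (Int.fract (a i)) <;> simp [h]
  set μ := MeasureTheory.volume.restrict (Set.Ioo (0 : ℝ) 1) with hμ
  have hprob : MeasureTheory.IsProbabilityMeasure μ := ⟨by simp [hμ]⟩
  set f : ℝ → V → ℝ := fun t i => ⌊a i⌋ +
    (Set.Iio (Int.fract (a i))).indicator (fun _ => (1 : ℝ)) t with hf
  have hfi : ∀ i, MeasureTheory.Integrable (fun t => f t i) μ := fun i =>
    (MeasureTheory.integrable_const _).add
      ((MeasureTheory.integrable_const _).indicator measurableSet_Iio)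
  have hint : MeasureTheory.Integrable f μ := MeasureTheory.Integrable.of_eval hfi
  have hmem : ∀ᵐ t ∂μ, f t ∈ convexHull ℝ C := by
    filter_upwards [MeasureTheory.ae_restrict_mem measurableSet_Ioo] with t ht
    refine subset_convexHull ℝ C ⟨⟨t, ht⟩, ?_⟩
    ext i
    exact hceil t ht (a i)
  have := (convex_convexHull ℝ C).integral_mem (hfin.isClosed_convexHull ℝ) hmem hint
  convert this using 1
  ext i
  rw [MeasureTheory.eval_integral (fun i => hfi i)]
  simp only [hf]
  rw [MeasureTheory.integral_add (MeasureTheory.integrable_const _)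
    ((MeasureTheory.integrable_const _).indicator measurableSet_Iio),
    MeasureTheory.integral_indicator measurableSet_Iio]
  have h0 := Int.fract_nonneg (a i)
  have h1 := Int.fract_lt_one (a i)
  have hI : Set.Iio (Int.fract (a i)) ∩ Set.Ioo 0 1 = Set.Ioo 0 (Int.fract (a i)) := by
    ext t; simp only [Set.mem_inter_iff, Set.mem_Iio, Set.mem_Ioo]
    constructor
    · rintro ⟨h, h', _⟩; exact ⟨h', h⟩
    · rintro ⟨h, h'⟩; exact ⟨h', h, h'.trans h1⟩
  simp [hμ, MeasureTheory.Measure.real, hI, h0,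
    MeasureTheory.Measure.restrict_apply, measurableSet_Iio]

/-- A single point of `Z` serves for finitely many radial points. -/
lemma exists_common_base (hne : Z.Nonempty) (hcv : Convex ℝ Z) {F : Set (V → ℝ)}
    (hF : F.Finite) (hrad : ∀ p ∈ F, Radial Z p) :
    ∃ b ∈ Z, ∀ p ∈ F, ∀ ε : ℝ, 0 < ε → ε ≤ 1 → (fun i => (1 - ε) * p i + ε * b i) ∈ Z := by
  induction F, hF using Set.Finite.induction_on with
  | empty => obtain ⟨z, hz⟩ := hne; exact ⟨z, hz, by simp⟩
  | @insert p F _ _ ih =>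
    obtain ⟨b₁, hb₁, h₁⟩ := ih fun p hp => hrad p (Set.mem_insert_of_mem _ hp)
    obtain ⟨b₂, hb₂, h₂⟩ := hrad p (Set.mem_insert _ _)
    have comb : ∀ (x y : V → ℝ) (q : V → ℝ), y ∈ Z →
        (∀ ε : ℝ, 0 < ε → ε ≤ 1 → (fun i => (1 - ε) * q i + ε * x i) ∈ Z) →
        ∀ ε : ℝ, 0 < ε → ε ≤ 1 →
          (fun i => (1 - ε) * q i + ε * ((1 / 2 : ℝ) * x i + (1 / 2 : ℝ) * y i)) ∈ Z := by
      intro x y q hy hx ε h0 h1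
      have h2 : 0 < 2 - ε := by linarith
      have := hcv (hx (ε / (2 - ε)) (by positivity) (by rw [div_le_one h2]; linarith)) hy
        (a := 1 - ε / 2) (b := ε / 2) (by linarith) (by linarith) (by ring)
      convert this using 1
      ext i
      simp only [Pi.add_apply, Pi.smul_apply, smul_eq_mul]
      field_simp
      ring
    refine ⟨_, hcv hb₁ hb₂ (a := 1 / 2) (b := 1 / 2) (by norm_num) (by norm_num) (by norm_num),
      ?_⟩
    rintro q (rfl | hq) ε h0 h1
    · convert comb b₂ b₁ q hb₁ h₂ ε h0 h1 using 1
      ext i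
      simp only [Pi.add_apply, Pi.smul_apply, smul_eq_mul]
      ring
    · exact comb b₁ b₂ q hb₂ (h₁ q hq) ε h0 h1

/-- A nonempty convex set invariant under all circle maps contains every point lying in the
relative interior of its integer difference bounds. Such a point `a` is pushed slightly away from
a base point `b` of `Z` without leaving the bounds; the pushed point is an average of integer
points within the bounds, all of them radial with base `b`, so that moving back towards `b` lands
in `Z`. -/
lemma mem_of_relInt [Finite V] [Nonempty V] (hne : Z.Nonempty) (hcv : Convex ℝ Z)
    (hinv : CircInv Z) {a : V → ℝ} (ha : ∀ i j, RelInt Z i j (a i - a j)) : a ∈ Z := by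
  have := Fintype.ofFinite V
  set P : Set (V → ℤ) := {p | (∀ i j c, Vld Z i j c → p i - p j ≤ c) ∧ ∀ i, |p i - a i| ≤ 2}
    with hP
  have hPfin : P.Finite := by
    have h2 : (Set.univ.pi fun i : V => Set.Icc ⌊a i - 2⌋ ⌈a i + 2⌉).Finite :=
      Set.Finite.pi fun i => Set.finite_Icc _ _
    refine h2.subset fun p hp i _ => ?_
    have := abs_le.1 (hp.2 i)
    constructor
    · have : (⌊a i - 2⌋ : ℝ) ≤ p i := (Int.floor_le _).trans (by linarith)
      exact_mod_cast this
    · have : (p i : ℝ) ≤ ⌈a i + 2⌉ := le_trans (by linarith) (Int.le_ceil _)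
      exact_mod_cast this
  obtain ⟨b, hb, hbF⟩ := exists_common_base hne hcv
    (hPfin.image fun p : V → ℤ => fun i => (p i : ℝ))
    (by rintro _ ⟨p, hp, rfl⟩; exact radInt_of_valid hcv hinv hp.1)
  have e1 : ∀ᶠ η in 𝓝[>] (0 : ℝ), ∀ i j, ∀ c : ℤ, Vld Z i j c →
      a i - a j - η * (b i - b j - (a i - a j)) ≤ c :=
    eventually_all.2 fun i => eventually_all.2 fun j => (ha i j).push hb
  have e2 : ∀ᶠ η in 𝓝[>] (0 : ℝ), ∀ i, |η * (b i - a i)| < 1 := by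
    refine eventually_all.2 fun i => ?_
    have : Continuous (fun η : ℝ => |η * (b i - a i)|) := by fun_prop
    have := this.tendsto 0
    simp only [zero_mul, abs_zero] at this
    exact (this.mono_left nhdsWithin_le_nhds).eventually_lt_const one_pos
  obtain ⟨η, h1, h2, h0⟩ := (e1.and (e2.and self_mem_nhdsWithin)).exists
  have h0 : 0 < η := h0
  set a' : V → ℝ := fun i => a i - η * (b i - a i) with ha'
  set ε := η / (1 + η) with hε
  have hε0 : 0 < ε := by positivity
  have hε1 : ε ≤ 1 := by rw [hε, div_le_one (by positivity)]; linarith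
  have hconv : Convex ℝ {p : V → ℝ | (fun i => (1 - ε) * p i + ε * b i) ∈ Z} := by
    intro p hp q hq s t hs ht hst
    have := hcv hp hq hs ht hst
    simp only [Set.mem_ofPred_eq]
    convert this using 1
    ext i
    simp only [Pi.add_apply, Pi.smul_apply, smul_eq_mul]
    have : t = 1 - s := by linarith
    subst this; ring
  have hmem := convexHull_min (s := Set.range fun t : Set.Ioo (0 : ℝ) 1 =>
    fun i => (⌈a' i - t⌉ : ℝ)) ?_ hconv (mem_convexHull_ceil a')
  · simp only [Set.mem_ofPred_eq] at hmem
    convert hmem using 1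
    ext i
    simp only [ha', hε]
    field_simp
    ring
  · rintro _ ⟨t, rfl⟩
    refine hbF _ ⟨fun i => ⌈a' i - t⌉, ⟨fun i j c hc => ?_, fun i => ?_⟩, rfl⟩ ε hε0 hε1
    · have h3 : a' i - t ≤ a' j - t + c := by
        have := h1 i j c hc
        simp only [ha']; linarith
      have := Int.ceil_mono h3
      rw [Int.ceil_add_intCast] at this
      linarith
    · have h3 := abs_lt.1 (h2 i)
      have h4 := Int.le_ceil (a' i - t)
      have h5 := Int.ceil_lt_add_one (a' i - t)
      have h6 := t.2.1
      have h7 := t.2.2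
      simp only [ha'] at h4 h5
      simp only [ha']
      rw [abs_le]; constructor <;> linarith

end IntegerPoints

/-! ### Extending partially prescribed points -/

section Extend

open Filter Topology

variable {V : Type} {Z : Set (V → ℝ)}

/-- `Z` contains a point that is strict for every valid bound that is not an equality on `Z`. -/
lemma exists_relInt_point [Finite V] (hne : Z.Nonempty) (hcv : Convex ℝ Z) :
    ∃ z ∈ Z, ∀ i j, RelInt Z i j (z i - z j) := by
  have := Fintype.ofFinite V
  have single : ∀ i j, ∃ z ∈ Z, RelInt Z i j (z i - z j) := by
    intro i j
    obtain ⟨z, hz⟩ := hne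
    by_cases hc : ∃ c, Vld Z i j c
    · obtain ⟨c, hc⟩ := hc
      obtain ⟨w, hw, hmin⟩ := exists_least_vld ⟨z, hz⟩ hc
      by_cases hs : ∃ z ∈ Z, z i - z j < w
      · obtain ⟨z, hz, hlt⟩ := hs
        refine ⟨z, hz, fun c hc => Or.inl ?_⟩
        have : (w : ℝ) ≤ c := by exact_mod_cast hmin c hc
        linarith
      · push Not at hs
        have heq : ∀ z ∈ Z, z i - z j = w := fun z hz => le_antisymm (hw z hz) (hs z hz)
        refine ⟨z, hz, fun c hc => ?_⟩
        rcases (hmin c hc).lt_or_eq with h | rfl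
        · left; rw [heq z hz]; exact_mod_cast h
        · exact Or.inr ⟨heq z hz, heq⟩
    · exact ⟨z, hz, fun c hc' => (hc ⟨c, hc'⟩).elim⟩
  have mix : ∀ i j (z z' : V → ℝ), z ∈ Z → z' ∈ Z → RelInt Z i j (z i - z j) →
      RelInt Z i j (((1 / 2 : ℝ) • z + (1 / 2 : ℝ) • z') i -
        ((1 / 2 : ℝ) • z + (1 / 2 : ℝ) • z') j) := by
    intro i j z z' hz hz' h c hc
    have h' := hc z' hz'
    simp only [Pi.add_apply, Pi.smul_apply, smul_eq_mul]
    rcases h c hc with h | ⟨h, hall⟩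
    · left; linarith
    · right
      have := hall z' hz'
      exact ⟨by linarith, hall⟩
  have key : ∀ s : Finset (V × V), ∃ z ∈ Z, ∀ p ∈ s, RelInt Z p.1 p.2 (z p.1 - z p.2) := by
    classical
    intro s
    induction s using Finset.induction_on with
    | empty => obtain ⟨z, hz⟩ := hne; exact ⟨z, hz, by simp⟩
    | insert p s _ ih =>
      obtain ⟨z, hz, hzs⟩ := ih
      obtain ⟨z', hz', hp⟩ := single p.1 p.2
      refine ⟨(1 / 2 : ℝ) • z + (1 / 2 : ℝ) • z',
        hcv hz hz' (by norm_num) (by norm_num) (by norm_num), fun q hq => ?_⟩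
      rcases Finset.mem_insert.1 hq with rfl | hq
      · rw [add_comm]; exact mix _ _ _ _ hz' hz hp
      · exact mix _ _ _ _ hz hz' (hzs q hq)
  obtain ⟨z, hz, h⟩ := key Finset.univ
  exact ⟨z, hz, fun i j => h (i, j) (Finset.mem_univ _)⟩

/-- Extension: values prescribed on `B` inside the relative interior of the bounds valid
on `Z` extend to a point of `Z` whose coordinates outside `B` exceed `M`, as soon as no valid
bound forbids this. The greatest solution of the bounds is taken outside `B`, after moving
the prescribed values slightly away from a relatively interior point of `Z`. -/
lemma exists_extension [Finite V] [Nonempty V] (hne : Z.Nonempty) (hcv : Convex ℝ Z)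
    (hinv : CircInv Z) {B : Set V} {α : V → ℝ} {M : ℝ}
    (hB : ∀ i ∈ B, ∀ j ∈ B, RelInt Z i j (α i - α j))
    (hout : ∀ i ∉ B, ∀ b ∈ B, ∀ c, Vld Z i b c → M < α b + c) :
    ∃ u ∈ Z, (∀ i ∈ B, u i = α i) ∧ ∀ i ∉ B, M < u i := by
  classical
  have := Fintype.ofFinite V
  obtain ⟨z, hz, hzr⟩ := exists_relInt_point hne hcv
  have hw : ∀ i j, ∃ w : ℤ, (∃ c, Vld Z i j c) → Vld Z i j w ∧ ∀ c, Vld Z i j c → w ≤ c := by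
    intro i j
    by_cases h : ∃ c, Vld Z i j c
    · obtain ⟨c, hc⟩ := h
      obtain ⟨w, hw⟩ := exists_least_vld hne hc
      exact ⟨w, fun _ => hw⟩
    · exact ⟨0, fun h' => (h h').elim⟩
  choose w hw using hw
  have e1 : ∀ᶠ η in 𝓝[>] (0 : ℝ), ∀ i j, i ∈ B → j ∈ B → ∀ c : ℤ, Vld Z i j c →
      α i - α j - η * (z i - z j - (α i - α j)) ≤ c := by
    refine eventually_all.2 fun i => eventually_all.2 fun j => ?_
    by_cases hi : i ∈ B
    · by_cases hj : j ∈ B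
      · filter_upwards [(hB i hi j hj).push hz] with η h _ _ using h
      · exact Eventually.of_forall fun η _ h => (hj h).elim
    · exact Eventually.of_forall fun η h => (hi h).elim
  have e2 : ∀ᶠ η in 𝓝[>] (0 : ℝ), ∀ i b, i ∉ B → b ∈ B → (∃ c, Vld Z i b c) →
      M * (1 + η) - η * z i < α b - η * (z b - α b) + w i b := by
    refine eventually_all.2 fun i => eventually_all.2 fun b => ?_
    by_cases hc : i ∉ B ∧ b ∈ B ∧ ∃ c, Vld Z i b c
    · have h0 := hout i hc.1 b hc.2.1 _ (hw i b hc.2.2).1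
      have h1 : Continuous (fun η : ℝ => M * (1 + η) - η * z i - (α b - η * (z b - α b) + w i b)) := by
        fun_prop
      have h2 := h1.tendsto 0
      have h3 : ∀ᶠ η in 𝓝[>] (0 : ℝ),
          M * (1 + η) - η * z i - (α b - η * (z b - α b) + w i b) < 0 :=
        (h2.mono_left nhdsWithin_le_nhds).eventually_lt_const (by simp; linarith)
      filter_upwards [h3] with η hη _ _ _
      linarith
    · exact Eventually.of_forall fun η h1 h2 h3 => (hc ⟨h1, h2, h3⟩).elim
  obtain ⟨η, h1, h2, h0⟩ := (e1.and (e2.and self_mem_nhdsWithin)).exists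
  have h0 : 0 < η := h0
  set α' : V → ℝ := fun i => α i - η * (z i - α i) with hα'
  obtain ⟨N, hN⟩ : ∃ N : ℝ, ∀ i, α' i ≤ N + z i ∧ M * (1 + η) - η * z i < N + z i := by
    obtain ⟨N₁, hN₁⟩ := (Set.finite_range fun i => α' i - z i).bddAbove
    obtain ⟨N₂, hN₂⟩ := (Set.finite_range fun i => M * (1 + η) - η * z i - z i).bddAbove
    refine ⟨max N₁ N₂ + 1, fun i => ?_⟩
    have h3 := hN₁ ⟨i, rfl⟩
    have h4 := hN₂ ⟨i, rfl⟩
    have h5 := le_max_left N₁ N₂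
    have h6 := le_max_right N₁ N₂
    simp only at h3 h4
    constructor <;> linarith
  set g : V → V → ℝ := fun b i =>
    if b ∈ B ∧ ∃ c, Vld Z i b c then α' b + w i b else N + z i with hg
  set u' : V → ℝ := fun i => min (N + z i) (Finset.univ.inf' Finset.univ_nonempty fun b => g b i)
    with hu'
  have hle1 : ∀ i, u' i ≤ N + z i := fun i => min_le_left _ _
  have hle2 : ∀ i, ∀ b ∈ B, (∃ c, Vld Z i b c) → u' i ≤ α' b + w i b := by
    intro i b hb hc
    refine (min_le_right _ _).trans ?_
    have : g b i = α' b + w i b := by simp only [hg]; rw [if_pos ⟨hb, hc⟩]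
    rw [← this]
    exact Finset.inf'_le (fun b => g b i) (Finset.mem_univ b)
  have hcase : ∀ i, u' i = N + z i ∨ ∃ b ∈ B, (∃ c, Vld Z i b c) ∧ u' i = α' b + w i b := by
    intro i
    obtain ⟨b, -, hb⟩ := Finset.exists_mem_eq_inf' (s := Finset.univ) Finset.univ_nonempty
      (fun b => g b i)
    rcases min_choice (N + z i) (Finset.univ.inf' Finset.univ_nonempty fun b => g b i) with h | h
    · exact Or.inl h
    · by_cases hc : b ∈ B ∧ ∃ c, Vld Z i b c
      · right
        refine ⟨b, hc.1, hc.2, ?_⟩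
        simp only [hu']; rw [h, hb]; simp only [hg]; rw [if_pos hc]
      · left
        simp only [hu']; rw [h, hb]; simp only [hg]; rw [if_neg hc]
  have huB : ∀ i ∈ B, u' i = α' i := by
    intro i hi
    apply le_antisymm
    · have hv : Vld Z i i 0 := fun z _ => by simp
      have := hle2 i i hi ⟨0, hv⟩
      have h3 : (w i i : ℝ) ≤ 0 := by exact_mod_cast (hw i i ⟨0, hv⟩).2 0 hv
      linarith
    · rcases hcase i with h | ⟨b, hb, hc, h⟩
      · rw [h]; exact (hN i).1
      · rw [h]
        have := h1 i b hi hb _ (hw i b hc).1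
        simp only [hα']; linarith
  have huM : ∀ i ∉ B, M * (1 + η) - η * z i < u' i := by
    intro i hi
    rcases hcase i with h | ⟨b, hb, hc, h⟩
    · rw [h]; exact (hN i).2
    · rw [h]; exact h2 i b hi hb hc
  have huV : ∀ i j c, Vld Z i j c → u' i - u' j ≤ c := by
    intro i j c hc
    rcases hcase j with h | ⟨b, hb, hc', h⟩
    · have := hle1 i; have := hc z hz; linarith
    · have hv : Vld Z i b (w j b + c) := fun y hy => by
        have := hc y hy
        have := (hw j b hc').1 y hy
        push_cast; linarith
      have h3 := hle2 i b hb ⟨_, hv⟩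
      have h4 : (w i b : ℝ) ≤ w j b + c := by exact_mod_cast (hw i b ⟨_, hv⟩).2 _ hv
      linarith
  have hη : (0 : ℝ) < 1 + η := by linarith
  refine ⟨fun i => (u' i + η * z i) / (1 + η), mem_of_relInt hne hcv hinv fun i j c hc => ?_,
    fun i hi => ?_, fun i hi => ?_⟩
  · have h3 := huV i j c hc
    rw [← sub_div, div_lt_iff₀ hη, div_eq_iff hη.ne']
    rcases hzr i j c hc with h | ⟨h, hall⟩
    · left
      have := mul_lt_mul_of_pos_left h h0
      linarith
    · right
      have hv : Vld Z j i (-c) := fun y hy => by have := hall y hy; push_cast; linarith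
      have h4 := huV j i _ hv
      push_cast at h4
      have h5 : u' i - u' j = c := by linarith
      refine ⟨?_, hall⟩
      calc u' i + η * z i - (u' j + η * z j) = (u' i - u' j) + η * (z i - z j) := by ring
        _ = c * (1 + η) := by rw [h5, h]; ring
  · beta_reduce
    rw [huB i hi, div_eq_iff hη.ne']; simp only [hα']; ring
  · beta_reduce
    rw [lt_div_iff₀ hη]; have := huM i hi; linarith

end Extend

/-! ### Convex unions of diagonal regions -/

section Separation

variable {Y : Type}

/-- A valuation with an additional coordinate `none` of value `0`. -/
def hat (v : ClockVal Y) : Option Y → ℝ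
  | none => 0
  | some x => v x

/-- The homogenisation of a set of valuations: all translates of the extended valuations. -/
def homog (S : Set (ClockVal Y)) : Set (Option Y → ℝ) :=
  {a | ∃ v ∈ S, ∀ x, (v x : ℝ) = a (some x) - a none}

/-- Invariance of a set of valuations under the circle maps fixing `0`. -/
def CellInv (S : Set (ClockVal Y)) : Prop :=
  ∀ φ : ℝ → ℝ, CircMap φ → φ 0 = 0 → ∀ v ∈ S, ∀ v' : ClockVal Y,
    (∀ x, (v' x : ℝ) = φ (v x)) → v' ∈ S

/-- `z` agrees with `v` on the clocks of value at most `M` in `v`, and exceeds `M` on the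
other clocks. -/
def Clip (M : ℕ) (v z : ClockVal Y) : Prop :=
  ∀ x, ((v x : ℝ) ≤ M → z x = v x) ∧ ((M : ℝ) < v x → (M : ℝ) < z x)

/-- The difference bounds whose truth is constant on the classes of `DRegEquiv M`. -/
def Allowed (M : ℕ) : Option Y → Option Y → ℤ → Prop
  | some _, some _, c => -(M : ℤ) < c ∧ c < M
  | none, none, _ => False
  | _, _, c => -(M : ℤ) ≤ c ∧ c ≤ M

lemma hat_nonneg (v : ClockVal Y) (i : Option Y) : 0 ≤ hat v i := by
  cases i <;> simp [hat]

lemma hat_mem_homog {S : Set (ClockVal Y)} {v : ClockVal Y} (hv : v ∈ S) : hat v ∈ homog S :=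
  ⟨v, hv, fun x => by simp [hat]⟩

lemma exists_of_homog {S : Set (ClockVal Y)} {a : Option Y → ℝ} (ha : a ∈ homog S) :
    ∃ v ∈ S, ∀ i j, a i - a j = hat v i - hat v j := by
  obtain ⟨v, hv, h⟩ := ha
  refine ⟨v, hv, ?_⟩
  have h' : ∀ i, hat v i = a i - a none := by
    rintro (_ | x)
    · simp [hat]
    · exact h x
  intro i j
  rw [h', h']; ring

lemma circMap_recentre {φ : ℝ → ℝ} (h : CircMap φ) (d : ℝ) :
    CircMap (fun t => φ (t + d) - φ d) := by
  refine ⟨fun a b hab => ?_, fun t => ?_⟩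
  · have := h.mono (show a + d < b + d by linarith)
    linarith
  · have := h.add_one (t + d)
    rw [show t + 1 + d = t + d + 1 by ring, this]; ring

lemma circInv_homog {S : Set (ClockVal Y)} (h : CellInv S) : CircInv (homog S) := by
  rintro φ hφ a ⟨v, hv, hva⟩
  have hψ := circMap_recentre hφ (a none)
  have hnn : ∀ x, 0 ≤ φ ((v x : ℝ) + a none) - φ (a none) := fun x => by
    have := hφ.mono.monotone (show a none ≤ (v x : ℝ) + a none by simp)
    linarith
  refine ⟨fun x => Real.toNNReal (φ ((v x : ℝ) + a none) - φ (a none)),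
    h _ hψ (by simp) v hv _ fun x => Real.coe_toNNReal _ (hnn x), fun x => ?_⟩
  rw [Real.coe_toNNReal _ (hnn x), hva]; simp

lemma convex_homog {S : Set (ClockVal Y)} (h : ConvexVal S) : Convex ℝ (homog S) := by
  rintro a ⟨v, hv, hva⟩ b ⟨w, hw, hwb⟩ s t hs ht hst
  lift s to NNReal using hs
  have hs1 : s ≤ 1 := by
    rw [← NNReal.coe_le_coe]; simp; linarith
  refine ⟨_, h v hv w hw s hs1, fun x => ?_⟩
  simp only [NNReal.coe_add, NNReal.coe_mul, NNReal.coe_sub hs1, hva, hwb,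
    NNReal.coe_one, Pi.add_apply, Pi.smul_apply, smul_eq_mul]
  rw [show t = 1 - s by linarith]; ring

lemma hat_combo (u w : ClockVal Y) {θ : NNReal} (hθ : θ ≤ 1) (i : Option Y) :
    hat (fun x => θ * u x + (1 - θ) * w x) i = θ * hat u i + (1 - θ) * hat w i := by
  cases i with
  | none => simp [hat]
  | some x => simp [hat, NNReal.coe_sub hθ]

lemma DRegEquiv.symm {M : ℕ} {v v' : ClockVal Y} (h : DRegEquiv M v v') : DRegEquiv M v' v := by
  refine ⟨fun x => ?_, fun x y c h1 h2 => (h.2 x y c h1 h2).symm⟩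
  obtain ⟨h1, h2, h3⟩ := h.1 x
  have : (v' x : ℝ) ≤ M → (v x : ℝ) ≤ M := fun hle => by
    by_contra hlt; push Not at hlt; exact absurd (h1.1 hlt) (not_lt.2 hle)
  exact ⟨h1.symm, fun hle => (h2 (this hle)).symm, fun hle => (h3 (this hle)).symm⟩

lemma le_int_iff (r : ℝ) (c : ℤ) : r ≤ c ↔ ⌊r⌋ < c ∨ (⌊r⌋ = c ∧ Int.fract r = 0) := by
  have hr := Int.floor_add_fract r
  have h0 := Int.fract_nonneg r
  constructor
  · intro h
    have : ⌊r⌋ ≤ c := by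
      have : (⌊r⌋ : ℝ) ≤ c := (Int.floor_le r).trans h
      exact_mod_cast this
    rcases this.lt_or_eq with h1 | h1
    · exact Or.inl h1
    · right
      refine ⟨h1, ?_⟩
      rw [← h1] at h
      linarith
  · rintro (h | ⟨h, h'⟩)
    · exact (Int.floor_lt.1 h).le
    · rw [← hr, h, h']; simp

lemma allowed_le_of {M : ℕ} {v v' : ClockVal Y} (h : DRegEquiv M v v') {i j : Option Y} {c : ℤ}
    (hc : Allowed M i j c) (hle : hat v i - hat v j ≤ c) : hat v' i - hat v' j ≤ c := by
  match i, j, hc with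
  | some x, some y, hc => exact (h.2 x y c hc.1 hc.2).1 hle
  | some x, none, hc =>
    obtain ⟨h1, h2, h3⟩ := h.1 x
    simp only [hat, sub_zero] at hle ⊢
    have hcM : (c : ℝ) ≤ M := by exact_mod_cast hc.2
    have hxM := hle.trans hcM
    rw [le_int_iff] at hle ⊢
    rwa [← h2 hxM, ← h3 hxM]
  | none, some x, hc =>
    obtain ⟨h1, h2, h3⟩ := h.1 x
    simp only [hat, zero_sub] at hle ⊢
    have hcM : -(M : ℝ) ≤ c := by exact_mod_cast hc.1
    by_cases hxM : (v x : ℝ) ≤ M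
    · have h4 : -c ≤ ⌊(v x : ℝ)⌋ := by rw [Int.le_floor]; push_cast; linarith
      rw [h2 hxM, Int.le_floor] at h4
      push_cast at h4; linarith
    · have := h1.1 (not_le.1 hxM)
      linarith

lemma Allowed.symm {M : ℕ} {i j : Option Y} {c : ℤ} (hc : Allowed M i j c) :
    Allowed M j i (-c) := by
  match i, j, hc with
  | some x, some y, hc => simp only [Allowed] at *; omega
  | some x, none, hc => simp only [Allowed] at *; omega
  | none, some x, hc => simp only [Allowed] at *; omega

lemma allowed_ge_of {M : ℕ} {v v' : ClockVal Y} (h : DRegEquiv M v v') {i j : Option Y} {c : ℤ}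
    (hc : Allowed M i j c) (hle : c ≤ hat v i - hat v j) : c ≤ hat v' i - hat v' j := by
  have := allowed_le_of h hc.symm (by push_cast; linarith)
  push_cast at this; linarith

lemma CellInv.inter_eq {S : Set (ClockVal Y)} (h : CellInv S) (i j : Option Y) (c : ℤ) :
    CellInv (S ∩ {z | hat z i - hat z j = c}) := by
  rintro φ hφ h0 v ⟨hv, hvc⟩ v' hv'
  refine ⟨h φ hφ h0 v hv v' hv', ?_⟩
  have hh : ∀ k, hat v' k = φ (hat v k) := by
    rintro (_ | x)
    · simp [hat, h0]
    · exact hv' x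
  simp only [Set.mem_ofPred_eq] at hvc ⊢
  rw [hh, hh, show hat v i = hat v j + c by linarith, hφ.add_int]; ring

lemma ConvexVal.inter_eq {S : Set (ClockVal Y)} (h : ConvexVal S) (i j : Option Y) (c : ℝ) :
    ConvexVal (S ∩ {z | hat z i - hat z j = c}) := by
  rintro u ⟨hu, huc⟩ w ⟨hw, hwc⟩ θ hθ
  refine ⟨h u hu w hw θ hθ, ?_⟩
  simp only [Set.mem_ofPred_eq] at *
  rw [hat_combo u w hθ, hat_combo u w hθ]
  linear_combination (θ : ℝ) * huc + (1 - (θ : ℝ)) * hwc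

lemma convexVal_le (i j : Option Y) (c : ℝ) : ConvexVal {z | hat z i - hat z j ≤ c} := by
  intro u hu w hw θ hθ
  simp only [Set.mem_ofPred_eq] at *
  rw [hat_combo u w hθ, hat_combo u w hθ]
  have h0 : (0 : ℝ) ≤ θ := θ.2
  have h1 : (θ : ℝ) ≤ 1 := by exact_mod_cast hθ
  nlinarith [mul_le_mul_of_nonneg_left hu h0, mul_le_mul_of_nonneg_left hw (sub_nonneg.2 h1)]

/-- A convex set stays convex after adding an adjacent open half-space to its trace on the
bounding hyperplane. -/
lemma convexVal_lex {K : Set (ClockVal Y)} (hK : ConvexVal K) (i j : Option Y) (c : ℝ) :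
    ConvexVal {z | hat z i - hat z j < c ∨ (hat z i - hat z j = c ∧ z ∈ K)} := by
  intro u hu w hw θ hθ
  by_cases hθ0 : θ = 0
  · convert hw using 1; ext x; simp [hθ0]
  by_cases hθ1 : θ = 1
  · convert hu using 1; ext x; simp [hθ1]
  simp only [Set.mem_ofPred_eq] at *
  rw [hat_combo u w hθ, hat_combo u w hθ]
  have h0 : (0 : ℝ) < θ := by exact_mod_cast pos_iff_ne_zero.2 hθ0
  have h1 : (θ : ℝ) < 1 := by exact_mod_cast lt_of_le_of_ne hθ hθ1
  rcases hu with hu | ⟨hu, huK⟩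
  · left
    have hw' : hat w i - hat w j ≤ c := by
      rcases hw with hw | hw
      · exact hw.le
      · exact hw.1.le
    nlinarith [mul_lt_mul_of_pos_left hu h0,
      mul_le_mul_of_nonneg_left hw' (sub_nonneg.2 h1.le)]
  · rcases hw with hw | ⟨hw, hwK⟩
    · left
      nlinarith [mul_lt_mul_of_pos_left hw (sub_pos.2 h1)]
    · right
      exact ⟨by linear_combination (θ : ℝ) * hu + (1 - (θ : ℝ)) * hw, hK u huK w hwK θ hθ⟩

/-- If every class-definable bound valid on `S` is respected by `v`, strictly unless it is an
equality on `S`, then some member of `S` agrees with `v` up to clipping at `M`. -/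
lemma exists_clip_mem [Finite Y] {M : ℕ} {S : Set (ClockVal Y)} (hne : S.Nonempty)
    (hcv : ConvexVal S) (hinv : CellInv S) {v : ClockVal Y}
    (hNS : ∀ i j c, Allowed M i j c → Vld (homog S) i j c →
      hat v i - hat v j < c ∨ (hat v i - hat v j = c ∧ ∀ z ∈ homog S, z i - z j = c)) :
    ∃ z ∈ S, Clip M v z := by
  have hZne : (homog S).Nonempty := by
    obtain ⟨z, hz⟩ := hne; exact ⟨_, hat_mem_homog hz⟩
  obtain ⟨z₀, hz₀⟩ := hZne
  have hnn : ∀ x : Y, ∀ z ∈ homog S, 0 ≤ z (some x) - z none := by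
    rintro x z ⟨v, hv, h⟩; rw [← h x]; exact NNReal.coe_nonneg _
  have hM0 : (0 : ℝ) ≤ M := Nat.cast_nonneg M
  -- a clock vanishing in `v` vanishes throughout `S`
  have zero_of : ∀ x : Y, hat v (some x) = 0 → ∀ z ∈ homog S, z (some x) - z none = 0 := by
    intro x hx z hz
    rcases hNS none (some x) 0 ⟨by omega, by omega⟩
      (fun z hz => by have := hnn x z hz; push_cast; linarith) with h | ⟨_, h⟩
    · rw [hx] at h; simp [hat] at h
    · have := h z hz; push_cast at this; linarith
  -- a clock that is at least `M` on `S` and at most `M` in `v` equals `M` throughout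
  have top_of : ∀ x : Y, hat v (some x) ≤ M → (∀ z ∈ homog S, (M : ℝ) ≤ z (some x) - z none) →
      hat v (some x) = M ∧ ∀ z ∈ homog S, z (some x) - z none = M := by
    intro x hx hge
    rcases hNS none (some x) (-M) ⟨by omega, by omega⟩
      (fun z hz => by have := hge z hz; push_cast; linarith) with h | ⟨h, h'⟩
    · simp only [hat] at h hx; push_cast at h; linarith
    · refine ⟨by simp only [hat] at h ⊢; push_cast at h; linarith, fun z hz => ?_⟩
      have := h' z hz; push_cast at this; linarith
  have hB : ∀ i ∈ {i | hat v i ≤ M}, ∀ j ∈ {i | hat v i ≤ M},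
      RelInt (homog S) i j (hat v i - hat v j) := by
    intro i hi j hj c hc
    simp only [Set.mem_ofPred_eq] at hi hj
    have hi0 := hat_nonneg v i
    have hj0 := hat_nonneg v j
    match i, j with
    | none, none =>
      have h := hc z₀ hz₀
      simp only [sub_self] at h ⊢
      rcases h.lt_or_eq with h | h
      · exact Or.inl h
      · exact Or.inr ⟨h, fun z hz => h⟩
    | some x, none =>
      by_cases h1 : (M : ℤ) < c
      · left
        have : (M : ℝ) < c := by exact_mod_cast h1
        simp only [hat] at *; linarith
      · by_cases h2 : -(M : ℤ) ≤ c
        · exact hNS _ _ c ⟨h2, by omega⟩ hc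
        · have h3 : (c : ℝ) < 0 := by
            have : c < 0 := by omega
            exact_mod_cast this
          have := hc z₀ hz₀; have := hnn x z₀ hz₀
          linarith
    | none, some x =>
      by_cases h1 : (M : ℤ) < c
      · left
        have : (M : ℝ) < c := by exact_mod_cast h1
        simp only [hat] at *; linarith
      · by_cases h2 : -(M : ℤ) ≤ c
        · exact hNS _ _ c ⟨h2, by omega⟩ hc
        · have h3 : (c : ℝ) < -M := by
            have : c < -M := by omega
            exact_mod_cast this
          have h4 := (top_of x hj fun z hz => by have := hc z hz; linarith).2 z₀ hz₀
          have := hc z₀ hz₀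
          linarith
    | some x, some y =>
      rcases lt_trichotomy (M : ℤ) c with h1 | h1 | h1
      · left
        have : (M : ℝ) < c := by exact_mod_cast h1
        linarith
      · have hMc : (M : ℝ) = c := by exact_mod_cast h1
        by_cases h2 : hat v (some x) - hat v (some y) < c
        · exact Or.inl h2
        right
        have hy : hat v (some y) = 0 := by linarith
        have hx : hat v (some x) = M := by linarith
        have hzy := zero_of y hy
        rcases hNS (some x) none M ⟨by omega, by omega⟩
          (fun z hz => by
            have := hzy z hz; have := hc z hz; push_cast; linarith) with h | ⟨_, h⟩
        · rw [hx] at h; simp [hat] at h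
        · refine ⟨by linarith, fun z hz => ?_⟩
          have := h z hz; have := hzy z hz; push_cast at *; linarith
      · by_cases h2 : -(M : ℤ) < c
        · exact hNS _ _ c ⟨h2, h1⟩ hc
        · have hcM : (c : ℝ) ≤ -M := by
            have : c ≤ -M := by omega
            exact_mod_cast this
          obtain ⟨hvy, hzy⟩ := top_of y hj fun z hz => by
            have := hc z hz; have := hnn x z hz; linarith
          have hcM' : (c : ℝ) = -M := by
            have := hzy z₀ hz₀; have := hc z₀ hz₀; have := hnn x z₀ hz₀; linarith
          rcases hNS (some x) none 0 ⟨by omega, by omega⟩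
            (fun z hz => by
              have := hzy z hz; have := hc z hz; push_cast; linarith) with h | ⟨h, h'⟩
          · simp only [hat] at h hi0; push_cast at h; linarith
          · right
            refine ⟨by simp only [hat] at h hvy ⊢; push_cast at h; linarith, fun z hz => ?_⟩
            have := h' z hz; have := hzy z hz; push_cast at *; linarith
  have hout : ∀ i ∉ {i | hat v i ≤ M}, ∀ b ∈ {i | hat v i ≤ M}, ∀ c, Vld (homog S) i b c →
      (M : ℝ) < hat v b + c := by
    intro i hi b hb c hc
    simp only [Set.mem_ofPred_eq, not_le] at hi hb
    have hb0 := hat_nonneg v b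
    match i, b with
    | none, _ => simp only [hat] at hi; linarith
    | some y, none =>
      by_contra hcM
      simp only [hat, zero_add, not_lt] at hcM
      have h0 : (0 : ℝ) ≤ c := (hnn y z₀ hz₀).trans (hc z₀ hz₀)
      have h1 : c ≤ M := by exact_mod_cast hcM
      have h2 : 0 ≤ c := by exact_mod_cast h0
      have := hNS (some y) none c ⟨by omega, h1⟩ hc
      simp only [hat] at *
      rcases this with h | ⟨h, _⟩ <;> linarith
    | some y, some x =>
      rcases lt_trichotomy (M : ℤ) c with h1 | h1 | h1
      · have : (M : ℝ) < c := by exact_mod_cast h1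
        linarith
      · have hMc : (M : ℝ) = c := by exact_mod_cast h1
        by_contra hcon
        have hzx := zero_of x (by linarith)
        have := hNS (some y) none M ⟨by omega, by omega⟩ (fun z hz => by
          have := hzx z hz; have := hc z hz; push_cast; linarith)
        simp only [hat] at *
        push_cast at this
        rcases this with h | ⟨h, _⟩ <;> linarith
      · by_cases h2 : -(M : ℤ) < c
        · have := hNS (some y) (some x) c ⟨h2, h1⟩ hc
          rcases this with h | ⟨h, _⟩ <;> linarith
        · have hcM : (c : ℝ) ≤ -M := by
            have : c ≤ -M := by omega
            exact_mod_cast this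
          obtain ⟨hvx, hzx⟩ := top_of x hb fun z hz => by
            have := hc z hz; have := hnn y z hz; linarith
          have := hNS (some y) none 0 ⟨by omega, by omega⟩
            (fun z hz => by have := hzx z hz; have := hc z hz; push_cast; linarith)
          simp only [hat] at *
          push_cast at this
          rcases this with h | ⟨h, _⟩ <;> linarith
  obtain ⟨u, ⟨z, hz, hzu⟩, huB, huO⟩ := exists_extension ⟨z₀, hz₀⟩ (convex_homog hcv)
    (circInv_homog hinv) hB hout
  have hu0 : u none = 0 := huB none (by simp [hat])
  refine ⟨z, hz, fun x => ⟨fun hx => ?_, fun hx => ?_⟩⟩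
  · rw [← NNReal.coe_inj, hzu x, hu0, huB (some x) hx]; simp [hat]
  · rw [hzu x, hu0, sub_zero]; exact huO (some x) (by simpa [hat] using hx)

/-- The pairs of coordinates whose difference is not a constant integer on `S`. -/
def loosePairs (S : Set (ClockVal Y)) : Set (Option Y × Option Y) :=
  {p | ¬ ∃ c : ℤ, ∀ z ∈ S, hat z p.1 - hat z p.2 = c}

/-- Separation: a valuation that agrees with no member of `S` up to clipping is separated from
`S` by a convex union of classes. Either a class-definable half-space separates, or the
bounding hyperplane of such a half-space contains `v` and the argument is repeated for the trace
of `S` on it, which has fewer loose pairs. -/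
lemma exists_separating [Finite Y] {M : ℕ} {v : ClockVal Y} :
    ∀ (n : ℕ) (S : Set (ClockVal Y)), (loosePairs S).ncard = n → ConvexVal S → CellInv S →
      (∀ z ∈ S, ¬ Clip M v z) →
      ∃ K, S ⊆ K ∧ ConvexVal K ∧ UnionOfClasses (DRegEquiv M) K ∧ v ∉ K := by
  intro n
  induction n using Nat.strong_induction_on with
  | _ n ih =>
  intro S hn hcv hinv hS
  by_cases hne : S.Nonempty
  swap
  · rw [Set.not_nonempty_iff_eq_empty] at hne
    exact ⟨∅, hne.le, fun u hu => hu.elim, fun u hu => hu.elim, fun h => h⟩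
  have hvld : ∀ i j c, Vld (homog S) i j c → ∀ z ∈ S, hat z i - hat z j ≤ c :=
    fun i j c h z hz => h _ (hat_mem_homog hz)
  by_cases hNS : ∀ i j c, Allowed M i j c → Vld (homog S) i j c →
      hat v i - hat v j < c ∨ (hat v i - hat v j = c ∧ ∀ z ∈ homog S, z i - z j = c)
  · obtain ⟨z, hz, hc⟩ := exists_clip_mem hne hcv hinv hNS
    exact (hS z hz hc).elim
  push Not at hNS
  obtain ⟨i, j, c, hall, hval, hge, hnot⟩ := hNS
  rcases hge.lt_or_eq with hgt | heq
  · refine ⟨{z | hat z i - hat z j ≤ c}, hvld i j c hval, convexVal_le i j c,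
      fun u hu u' hE => allowed_le_of hE hall hu, ?_⟩
    exact not_le.2 hgt
  obtain ⟨y, hy, hyne⟩ := hnot heq.symm
  obtain ⟨y', hy', hyy⟩ := exists_of_homog hy
  obtain ⟨K, hSK, hKcv, hKun, hvK⟩ : ∃ K, S ∩ {z | hat z i - hat z j = c} ⊆ K ∧ ConvexVal K ∧
      UnionOfClasses (DRegEquiv M) K ∧ v ∉ K := by
    by_cases hne' : (S ∩ {z | hat z i - hat z j = c}).Nonempty
    · refine ih _ ?_ _ rfl (hcv.inter_eq i j c) (hinv.inter_eq i j c) fun z hz => hS z hz.1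
      obtain ⟨z, hz, hzc⟩ := hne'
      rw [← hn]
      refine Set.ncard_lt_ncard ⟨fun p hp ⟨d, hd⟩ => hp ⟨d, fun z hz => hd z hz.1⟩, fun hsub => ?_⟩
        (Set.toFinite _)
      have : (i, j) ∈ loosePairs S := by
        rintro ⟨d, hd⟩
        have h1 := hd z hz
        have h2 := hd y' hy'
        simp only [Set.mem_ofPred_eq] at hzc h1 h2
        apply hyne
        rw [hyy, h2, ← h1, hzc]
      exact hsub this ⟨c, fun z hz => hz.2⟩
    · rw [Set.not_nonempty_iff_eq_empty] at hne'
      exact ⟨∅, hne'.le, fun u hu => hu.elim, fun u hu => hu.elim, fun h => h⟩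
  refine ⟨{z | hat z i - hat z j < c ∨ (hat z i - hat z j = c ∧ z ∈ K)}, fun z hz => ?_,
    convexVal_lex hKcv i j c, ?_, ?_⟩
  · rcases (hvld i j c hval z hz).lt_or_eq with h | h
    · exact Or.inl h
    · exact Or.inr ⟨h, hSK ⟨hz, h⟩⟩
  · rintro u (hu | ⟨hu, huK⟩) u' hE
    · left
      by_contra hcon
      push Not at hcon
      exact absurd (allowed_ge_of hE.symm hall hcon) (not_le.2 hu)
    · right
      exact ⟨le_antisymm (allowed_le_of hE hall hu.le) (allowed_ge_of hE hall hu.ge),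
        hKun u huK u' hE⟩
  · rintro (h | ⟨_, h⟩)
    · linarith
    · exact hvK h

/-- Every member of `approxZ M S` agrees with a member of `S` up to clipping. -/
lemma exists_clip_of_mem_approxZ [Finite Y] {M : ℕ} {S : Set (ClockVal Y)} (hcv : ConvexVal S)
    (hinv : CellInv S) {v : ClockVal Y} (hv : v ∈ approxZ M S) : ∃ z ∈ S, Clip M v z := by
  by_contra! hcon
  obtain ⟨K, h1, h2, h3, h4⟩ := exists_separating (M := M) (v := v) _ S rfl hcv hinv hcon
  exact h4 (hv K ⟨h1, h2, h3⟩)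

end Separation

/-! ### Circle maps acting on valuations, guards and regions -/

section Dynamics

open Filter Topology

variable {Y : Type}

lemma CircMap.map_int {φ : ℝ → ℝ} (h : CircMap φ) (h0 : φ 0 = 0) (n : ℤ) : φ n = n := by
  have := h.add_int 0 n
  simpa [h0] using this

lemma CircMap.map_nat {φ : ℝ → ℝ} (h : CircMap φ) (h0 : φ 0 = 0) (n : ℕ) : φ n = n := by
  exact_mod_cast h.map_int h0 n

lemma CircMap.floor_map {φ : ℝ → ℝ} (h : CircMap φ) (h0 : φ 0 = 0) (t : ℝ) : ⌊φ t⌋ = ⌊t⌋ := by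
  rw [Int.floor_eq_iff]
  constructor
  · rw [← h.map_int h0]; exact h.mono.monotone (Int.floor_le t)
  · have := h.map_int h0 (⌊t⌋ + 1)
    push_cast at this
    rw [← this]; exact h.mono (Int.lt_floor_add_one t)

lemma CircMap.sat_iff {φ : ℝ → ℝ} (h : CircMap φ) (h0 : φ 0 = 0) (o : CmpOp) (t : ℝ) (n : ℕ) :
    CmpOp.sat o (φ t) n ↔ CmpOp.sat o t n := by
  rw [← h.map_nat h0 n]
  have hn := h.map_nat h0 n
  cases o <;> simp only [CmpOp.sat, ge_iff_le, gt_iff_lt, hn]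
  · rw [← h.mono.lt_iff_lt (a := t), hn]
  · rw [← h.mono.le_iff_le (a := t), hn]
  · rw [← h.mono.injective.eq_iff (a := t), hn]
  · rw [← h.mono.le_iff_le (b := t), hn]
  · rw [← h.mono.lt_iff_lt (b := t), hn]

lemma dRegEquiv_of_circMap {φ : ℝ → ℝ} (h : CircMap φ) (h0 : φ 0 = 0) {M : ℕ}
    {v v' : ClockVal Y} (hv : ∀ x, (v' x : ℝ) = φ (v x)) : DRegEquiv M v v' := by
  refine ⟨fun x => ⟨?_, fun _ => ?_, fun _ => ?_⟩, fun x y c _ _ => ?_⟩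
  · rw [hv, ← h.map_nat h0 M, h.mono.lt_iff_lt, h.map_nat h0]
  · rw [hv, h.floor_map h0]
  · have e1 : ∀ r : ℝ, Int.fract r = 0 ↔ r = ⌊r⌋ := fun r => by
      rw [← Int.self_sub_floor, sub_eq_zero]
    rw [e1, e1, hv, h.floor_map h0]
    nth_rewrite 2 [← h.map_int h0]
    exact h.mono.injective.eq_iff.symm
  · rw [sub_le_iff_le_add, sub_le_iff_le_add, hv, hv, add_comm, ← h.mono.le_iff_le, h.add_int,
      add_comm]

lemma UnionOfClasses.cellInv {M : ℕ} {S : Set (ClockVal Y)}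
    (h : UnionOfClasses (DRegEquiv M) S) : CellInv S :=
  fun _ hφ h0 v hv v' hv' => h v hv v' (dRegEquiv_of_circMap hφ h0 hv')

lemma DRegEquiv.regEquiv {M : ℕ} {v v' : ClockVal Y} (h : DRegEquiv M v v') :
    RegEquiv M v v' := by
  intro x y
  obtain ⟨hx1, hx2, hx3⟩ := h.1 x
  obtain ⟨hy1, hy2, hy3⟩ := h.1 y
  refine ⟨hx1, hx2, hx3, fun hx hy => ?_⟩
  have key : ∀ a b : ℝ, Int.fract a ≤ Int.fract b ↔ a - b ≤ ((⌊a⌋ - ⌊b⌋ : ℤ) : ℝ) := by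
    intro a b
    rw [← Int.self_sub_floor, ← Int.self_sub_floor]
    push_cast
    constructor <;> intro h <;> linarith
  have hfl : ∀ t : NNReal, (t : ℝ) ≤ M → 0 ≤ ⌊(t : ℝ)⌋ ∧ ⌊(t : ℝ)⌋ ≤ M ∧
      (⌊(t : ℝ)⌋ = M → Int.fract (t : ℝ) = 0) := by
    intro t ht
    have h0 : 0 ≤ ⌊(t : ℝ)⌋ := Int.floor_nonneg.2 t.2
    refine ⟨h0, ?_, fun he => ?_⟩
    · have : (⌊(t : ℝ)⌋ : ℝ) ≤ M := (Int.floor_le _).trans ht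
      exact_mod_cast this
    · have e1 := Int.floor_add_fract (t : ℝ)
      rw [he] at e1
      have := Int.fract_nonneg (t : ℝ)
      push_cast at e1
      linarith
  obtain ⟨ax, bx, cx⟩ := hfl _ hx
  obtain ⟨ay, bye, cy⟩ := hfl _ hy
  by_cases h1 : ⌊(v x : ℝ)⌋ - ⌊(v y : ℝ)⌋ < M
  · by_cases h2 : -(M : ℤ) < ⌊(v x : ℝ)⌋ - ⌊(v y : ℝ)⌋
    · rw [key, key, ← hx2 hx, ← hy2 hy]
      exact h.2 x y _ h2 h1
    · have f1 := cy (by omega)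
      have f2 := (hy3 hy).1 f1
      rw [f1, f2, Int.fract_nonneg _ |>.ge_iff_eq', Int.fract_nonneg _ |>.ge_iff_eq']
      exact hx3 hx
  · have f1 := cx (by omega)
    have f2 := (hx3 hx).1 f1
    rw [f1, f2]
    exact ⟨fun _ => Int.fract_nonneg _, fun _ => Int.fract_nonneg _⟩

/-- A finite order isomorphism between subsets of `[0,1)` containing `0` is interpolated by a
circle map. -/
lemma exists_circMap_interp {ι : Type} [Finite ι] {α β : ι → ℝ} (i₀ : ι) (hα₀ : α i₀ = 0)
    (hβ₀ : β i₀ = 0) (hα : ∀ i, 0 ≤ α i ∧ α i < 1) (hβ : ∀ i, 0 ≤ β i ∧ β i < 1)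
    (hord : ∀ i j, α i ≤ α j ↔ β i ≤ β j) :
    ∃ φ, CircMap φ ∧ φ 0 = 0 ∧ ∀ i, φ (α i) = β i := by
  have := Fintype.ofFinite ι
  have : Nonempty ι := ⟨i₀⟩
  have small : ∀ r : ℝ, 0 < r → ∀ᶠ ε in 𝓝[>] (0 : ℝ), ε ≤ r := fun r hr =>
    Filter.Eventually.filter_mono nhdsWithin_le_nhds (eventually_le_nhds hr)
  have e1 : ∀ᶠ ε in 𝓝[>] (0 : ℝ), ∀ i, ε ≤ 1 - β i :=
    eventually_all.2 fun i => small _ (by linarith [(hβ i).2])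
  have e2 : ∀ᶠ ε in 𝓝[>] (0 : ℝ), ∀ i j, β i < β j → ε ≤ β j - β i := by
    refine eventually_all.2 fun i => eventually_all.2 fun j => ?_
    by_cases h : β i < β j
    · filter_upwards [small (β j - β i) (by linarith)] with ε hε _ using hε
    · exact Eventually.of_forall fun ε h' => (h h').elim
  obtain ⟨ε, hε1, hε2, hε3, hε0⟩ :=
    (e1.and (e2.and ((small 1 one_pos).and self_mem_nhdsWithin))).exists
  have hε0 : 0 < ε := hε0
  -- the supremum of these jump functions of slope `ε` interpolates, since `ε` is at most
  -- every gap between the values `β i`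
  set g : ι → ℝ → ℝ := fun i t => if α i ≤ t then β i + ε * (t - α i) else ε * t - 1 with hg
  set f : ℝ → ℝ := fun t => Finset.univ.sup' Finset.univ_nonempty fun i => g i t with hf
  have hgf : ∀ i t, g i t ≤ f t := fun i t =>
    Finset.le_sup' (fun i => g i t) (Finset.mem_univ i)
  have hfα : ∀ j, f (α j) = β j := by
    intro j
    apply le_antisymm
    · refine Finset.sup'_le _ _ fun i _ => ?_
      simp only [hg]
      split_ifs with h
      · rcases ((hord i j).1 h).lt_or_eq with h1 | h1
        · have := hε2 i j h1
          have h2 : α j - α i ≤ 1 := by linarith [(hα i).1, (hα j).2]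
          nlinarith
        · have h2 : α j = α i := le_antisymm ((hord j i).2 h1.ge) h
          rw [h2, h1]; simp
      · nlinarith [(hα j).1, (hα j).2, (hβ j).1]
    · have := hgf j (α j)
      simpa [hg] using this
  have hf_mono : ∀ t t', 0 ≤ t → t < t' → t' < 1 → f t < f t' := by
    intro t t' h0 hlt h1
    refine (Finset.sup'_lt_iff _).2 fun i _ => lt_of_lt_of_le ?_ (hgf i t')
    have hεt := mul_lt_mul_of_pos_left hlt hε0
    simp only [hg]
    split_ifs with ha hb hb
    · linarith
    · linarith
    · have : 0 ≤ ε * (t' - α i) := mul_nonneg hε0.le (by linarith)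
      nlinarith [(hβ i).1]
    · linarith
  have hf0 : f 0 = 0 := by have := hfα i₀; rwa [hα₀, hβ₀] at this
  have hf_lt : ∀ t, 0 ≤ t → t < 1 → f t < 1 := by
    intro t h0 h1
    refine (Finset.sup'_lt_iff _).2 fun i _ => ?_
    simp only [hg]
    split_ifs with ha
    · have := hε1 i
      have := mul_lt_mul_of_pos_left (show t - α i < 1 by linarith [(hα i).1]) hε0
      linarith
    · nlinarith
  have hf_nn : ∀ t, 0 ≤ t → t < 1 → 0 ≤ f t := by
    intro t h0 h1
    rcases h0.lt_or_eq with h | h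
    · have := hf_mono 0 t le_rfl h h1; linarith
    · rw [← h, hf0]
  have hfr : ∀ t : ℝ, 0 ≤ f (Int.fract t) ∧ f (Int.fract t) < 1 := fun t =>
    ⟨hf_nn _ (Int.fract_nonneg t) (Int.fract_lt_one t),
      hf_lt _ (Int.fract_nonneg t) (Int.fract_lt_one t)⟩
  refine ⟨fun t => ⌊t⌋ + f (Int.fract t), ⟨fun t t' hlt => ?_, fun t => ?_⟩, by simp [hf0],
    fun i => ?_⟩
  · rcases (Int.floor_mono hlt.le).lt_or_eq with h | h
    · have : (⌊t⌋ : ℝ) + 1 ≤ ⌊t'⌋ := by exact_mod_cast h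
      linarith [(hfr t).2, (hfr t').1]
    · have h2 : Int.fract t < Int.fract t' := by
        rw [← Int.self_sub_floor, ← Int.self_sub_floor, h]; linarith
      have := hf_mono _ _ (Int.fract_nonneg t) h2 (Int.fract_lt_one t')
      rw [h]; linarith
  · simp only [Int.floor_add_one, Int.fract_add_one]; push_cast; ring
  · have h1 : ⌊α i⌋ = 0 := Int.floor_eq_iff.2 (by simpa using hα i)
    have h2 : Int.fract (α i) = α i := by rw [← Int.self_sub_floor, h1]; simp
    simp only [h1, h2, hfα]; simp

/-- Region-equivalent valuations are related, on the clocks below `M`, by a circle map. -/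
lemma exists_circMap_of_regEquiv [Finite Y] {M : ℕ} {z v : ClockVal Y} (h : RegEquiv M z v) :
    ∃ φ, CircMap φ ∧ φ 0 = 0 ∧ ∀ x, (v x : ℝ) ≤ M → φ (z x) = v x := by
  have hzM : ∀ x, (v x : ℝ) ≤ M → (z x : ℝ) ≤ M := fun x hx => by
    by_contra hlt; push Not at hlt; exact absurd ((h x x).1.1 hlt) (not_lt.2 hx)
  obtain ⟨φ, hφ, h0, hi⟩ := exists_circMap_interp (ι := Option {x : Y // (v x : ℝ) ≤ M})
    (α := fun i => i.elim 0 fun x => Int.fract (z x.1 : ℝ))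
    (β := fun i => i.elim 0 fun x => Int.fract (v x.1 : ℝ)) none rfl rfl
    (by rintro (_ | x) <;> simp [Int.fract_nonneg, Int.fract_lt_one])
    (by rintro (_ | x) <;> simp [Int.fract_nonneg, Int.fract_lt_one]) (by
      have hle0 : ∀ r : ℝ, Int.fract r ≤ 0 ↔ Int.fract r = 0 := fun r =>
        ⟨fun h => le_antisymm h (Int.fract_nonneg r), fun h => h.le⟩
      rintro (_ | x) (_ | y)
      · simp
      · simp [Int.fract_nonneg]
      · simp only [Option.elim]
        rw [hle0, hle0]
        exact (h x.1 x.1).2.2.1 (hzM _ x.2)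
      · exact (h x.1 y.1).2.2.2 (hzM _ x.2) (hzM _ y.2))
  refine ⟨φ, hφ, h0, fun x hx => ?_⟩
  have h1 := hi (some ⟨x, hx⟩)
  simp only [Option.elim] at h1
  have h2 := hφ.add_int (Int.fract (z x : ℝ)) ⌊(z x : ℝ)⌋
  rw [Int.fract_add_floor, h1, (h x x).2.1 (hzM x hx), Int.fract_add_floor] at h2
  exact h2

/-! ### Successors and reachable valuations -/

/-- The successors of `T` under guard `g` and reset `R` by delays satisfying `P`. -/
def succSet (P : NNReal → Prop) (g : Guard Y) (R : Set Y) (T : Set (ClockVal Y)) :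
    Set (ClockVal Y) :=
  {v' | ∃ v ∈ T, ∃ d, P d ∧ Guard.sat g (ClockVal.add v d) ∧
    v' = resetVal R (ClockVal.add v d)}

/-- The delay `d` becomes `φ d`, and the valuation before it is moved by the circle map `φ`
recentred at `d`. -/
lemma CellInv.succSet {P : NNReal → Prop} {g : Guard Y} {R : Set Y} {T : Set (ClockVal Y)}
    (hP : ∀ φ, CircMap φ → φ 0 = 0 → ∀ d d' : NNReal, (d' : ℝ) = φ d → P d → P d')
    (h : CellInv T) : CellInv (succSet P g R T) := by
  rintro φ hφ h0 _ ⟨v, hv, d, hd, hg, rfl⟩ w hw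
  have hψ := circMap_recentre hφ d
  have hnn : ∀ x, 0 ≤ φ ((v x : ℝ) + d) - φ d := fun x => by
    have := hφ.mono.monotone (show (d : ℝ) ≤ (v x : ℝ) + d by simp)
    linarith
  have hd0 : 0 ≤ φ d := by rw [← h0]; exact hφ.mono.monotone d.2
  set v₁ : ClockVal Y := fun x => Real.toNNReal (φ ((v x : ℝ) + d) - φ d) with hv₁
  set d₁ : NNReal := Real.toNNReal (φ d) with hd₁
  have hd₁' : (d₁ : ℝ) = φ d := Real.coe_toNNReal _ hd0
  have hsum : ∀ x, (ClockVal.add v₁ d₁ x : ℝ) = φ (ClockVal.add v d x) := fun x => by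
    simp only [ClockVal.add, NNReal.coe_add, hd₁', hv₁, Real.coe_toNNReal _ (hnn x)]
    ring
  refine ⟨v₁, h _ hψ (by simp) v hv v₁ fun x => Real.coe_toNNReal _ (hnn x), d₁,
    hP φ hφ h0 d d₁ hd₁' hd, fun c hc => ?_, ?_⟩
  · rw [hsum, hφ.sat_iff h0]; exact hg c hc
  · ext x
    rw [hw]
    by_cases hx : x ∈ R
    · simp [resetVal, hx, h0]
    · simp [resetVal, hx, hsum]

lemma CmpOp.sat_combo {o : CmpOp} {a b c θ : ℝ} (h0 : 0 ≤ θ) (h1 : θ ≤ 1) (ha : o.sat a c)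
    (hb : o.sat b c) : o.sat (θ * a + (1 - θ) * b) c := by
  have h1' := sub_nonneg.2 h1
  cases o <;> simp only [CmpOp.sat] at *
  · rcases h0.lt_or_eq with h | h
    · nlinarith [mul_lt_mul_of_pos_left ha h, mul_le_mul_of_nonneg_left hb.le h1']
    · rw [← h]; linarith
  · nlinarith [mul_le_mul_of_nonneg_left ha h0, mul_le_mul_of_nonneg_left hb h1']
  · rw [ha, hb]; ring
  · nlinarith [mul_le_mul_of_nonneg_left ha h0, mul_le_mul_of_nonneg_left hb h1']
  · rcases h0.lt_or_eq with h | h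
    · nlinarith [mul_lt_mul_of_pos_left ha h, mul_le_mul_of_nonneg_left hb.le h1']
    · rw [← h]; linarith

lemma ConvexVal.succSet {g : Guard Y} {R : Set Y} {T : Set (ClockVal Y)} (h : ConvexVal T) :
    ConvexVal (succSet (fun _ => True) g R T) := by
  rintro _ ⟨u, hu, d, -, hgu, rfl⟩ _ ⟨w, hw, e, -, hgw, rfl⟩ θ hθ
  have hsum : ∀ x, ClockVal.add (fun x => θ * u x + (1 - θ) * w x) (θ * d + (1 - θ) * e) x =
      θ * ClockVal.add u d x + (1 - θ) * ClockVal.add w e x := fun x => by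
    simp only [ClockVal.add]; ring
  refine ⟨_, h u hu w hw θ hθ, θ * d + (1 - θ) * e, trivial, fun c hc => ?_, ?_⟩
  · rw [hsum]
    push_cast [NNReal.coe_sub hθ]
    exact CmpOp.sat_combo θ.2 (by exact_mod_cast hθ) (hgu c hc) (hgw c hc)
  · ext x
    by_cases hx : x ∈ R
    · simp [resetVal, hx]
    · simp only [resetVal, hx, if_false, hsum]

lemma convexVal_approxZ (M : ℕ) (T : Set (ClockVal Y)) : ConvexVal (approxZ M T) :=
  fun u hu w hw θ hθ K hK => hK.2.1 u (hu K hK) w (hw K hK) θ hθ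

lemma unionOfClasses_approxZ (M : ℕ) (T : Set (ClockVal Y)) :
    UnionOfClasses (DRegEquiv M) (approxZ M T) :=
  fun u hu u' hE K hK => hK.2.2 u (hu K hK) u' hE

lemma Clip.trans {M : ℕ} {u v w : ClockVal Y} (h : Clip M u v) (h' : Clip M v w) :
    Clip M u w := fun x =>
  ⟨fun hx => by
    have h1 := (h x).1 hx
    rw [← h1]
    exact (h' x).1 (by rw [h1]; exact hx), fun hx => (h' x).2 ((h x).2 hx)⟩

lemma Clip.sat {M : ℕ} {u v : ClockVal Y} (h : Clip M u v) {g : Guard Y}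
    (hg : ∀ c ∈ g, c.bound ≤ M) (hu : Guard.sat g u) : Guard.sat g v := by
  intro c hc
  have hs := hu c hc
  have hb : (c.bound : ℝ) ≤ M := by exact_mod_cast hg c hc
  by_cases hx : (u c.clock : ℝ) ≤ M
  · rwa [(h c.clock).1 hx]
  · push Not at hx
    have hx' := (h c.clock).2 hx
    generalize c.cmp = o at *
    cases o <;> simp only [CmpOp.sat] at * <;> linarith

/-- Clipping is compatible with delays, and delays beyond `M + 1` may be cut down to `M + 1`. -/
lemma Clip.delay {M : ℕ} {u v : ClockVal Y} (h : Clip M u v) (d : NNReal) :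
    Clip M (ClockVal.add u d) (ClockVal.add v (min d (M + 1))) := by
  intro x
  obtain ⟨h1, h2⟩ := h x
  have hmin : ((min d (M + 1) : NNReal) : ℝ) = min (d : ℝ) (M + 1) := by push_cast; rfl
  have hd : (0 : ℝ) ≤ d := d.2
  have hu : (0 : ℝ) ≤ u x := (u x).2
  constructor
  · intro hx
    simp only [ClockVal.add, NNReal.coe_add] at hx
    rw [← NNReal.coe_inj]
    simp only [ClockVal.add, NNReal.coe_add, hmin]
    rw [h1 (by linarith), min_eq_left (by linarith)]
  · intro hx
    simp only [ClockVal.add, NNReal.coe_add, hmin] at hx ⊢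
    by_cases hxM : (u x : ℝ) ≤ M
    · rw [h1 hxM]
      rcases min_choice (d : ℝ) (M + 1) with h3 | h3 <;> rw [h3] <;> linarith
    · have := h2 (not_le.1 hxM)
      have : 0 ≤ min (d : ℝ) (M + 1) := le_min hd (by positivity)
      linarith

lemma Clip.reset {M : ℕ} {u v : ClockVal Y} (h : Clip M u v) (R : Set Y) :
    Clip M (resetVal R u) (resetVal R v) := by
  intro x
  by_cases hx : x ∈ R
  · simp [resetVal, hx]
  · simpa [resetVal, hx] using h x

/-- The valuations reachable in `i` steps by delays at most `M + 1`. -/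
def reachB (M : ℕ) (gs : ℕ → Guard Y) (Rs : ℕ → Set Y) : ℕ → Set (ClockVal Y)
  | 0 => {zeroVal Y}
  | i + 1 => succSet (fun d => d ≤ M + 1) (gs i) (Rs i) (reachB M gs Rs i)

/-- The sets obtained by alternating successors with the abstraction operator `op`. -/
def absSeq (op : Set (ClockVal Y) → Set (ClockVal Y)) (gs : ℕ → Guard Y) (Rs : ℕ → Set Y) :
    ℕ → Set (ClockVal Y)
  | 0 => {zeroVal Y}
  | i + 1 => op (succSet (fun _ => True) (gs i) (Rs i) (absSeq op gs Rs i))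

lemma cellInv_zero : CellInv ({zeroVal Y} : Set (ClockVal Y)) := by
  rintro φ hφ h0 _ rfl v' hv'
  ext x
  rw [hv']; simp [zeroVal, h0]

lemma convexVal_zero : ConvexVal ({zeroVal Y} : Set (ClockVal Y)) := by
  rintro _ rfl _ rfl θ hθ
  ext x; simp [zeroVal]

lemma cellInv_reachB (M : ℕ) (gs : ℕ → Guard Y) (Rs : ℕ → Set Y) (i : ℕ) :
    CellInv (reachB M gs Rs i) := by
  induction i with
  | zero => exact cellInv_zero
  | succ i ih =>
    refine CellInv.succSet (fun φ hφ h0 d d' hd' hd => ?_) ih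
    have h1 := hφ.map_nat h0 (M + 1)
    have h2 : (d : ℝ) ≤ ((M + 1 : ℕ) : ℝ) := by push_cast; exact_mod_cast hd
    have h3 := hφ.mono.monotone h2
    rw [← hd', h1] at h3
    exact_mod_cast h3

lemma exists_reachB_succ {M : ℕ} {gs : ℕ → Guard Y} {Rs : ℕ → Set Y}
    (hgs : ∀ i, ∀ c ∈ gs i, c.bound ≤ M) {i : ℕ} {T : Set (ClockVal Y)}
    (hT : ∀ v ∈ T, ∃ u ∈ reachB M gs Rs i, Clip M v u) {z : ClockVal Y}
    (hz : z ∈ succSet (fun _ => True) (gs i) (Rs i) T) :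
    ∃ u ∈ reachB M gs Rs (i + 1), Clip M z u := by
  obtain ⟨w, hw, d, -, hg, rfl⟩ := hz
  obtain ⟨u, hu, hc⟩ := hT w hw
  have hcd := hc.delay d
  exact ⟨_, ⟨u, hu, _, min_le_right _ _, hcd.sat (hgs i) hg, rfl⟩, hcd.reset (Rs i)⟩

/-- Up to clipping at `M`, the `closureR` abstraction reaches nothing that is not reachable. -/
lemma exists_reachB_closureR [Finite Y] {M : ℕ} {gs : ℕ → Guard Y} {Rs : ℕ → Set Y}
    (hgs : ∀ i, ∀ c ∈ gs i, c.bound ≤ M) (i : ℕ) :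
    ∀ v ∈ absSeq (closureR M) gs Rs i, ∃ u ∈ reachB M gs Rs i, Clip M v u := by
  induction i with
  | zero => exact fun v hv => ⟨v, hv, fun x => ⟨fun _ => rfl, fun h => h⟩⟩
  | succ i ih =>
    rintro v ⟨z, hz, hE⟩
    obtain ⟨u, hu, hc⟩ := exists_reachB_succ hgs ih hz
    obtain ⟨φ, hφ, h0, hφv⟩ := exists_circMap_of_regEquiv hE
    have hnn : ∀ x, 0 ≤ φ (u x) := fun x => by rw [← h0]; exact hφ.mono.monotone (u x).2
    refine ⟨fun x => Real.toNNReal (φ (u x)), cellInv_reachB M gs Rs (i + 1) φ hφ h0 u hu _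
      fun x => Real.coe_toNNReal _ (hnn x), fun x => ⟨fun hx => ?_, fun hx => ?_⟩⟩
    · have hzx : (z x : ℝ) ≤ M := by
        by_contra hlt; push Not at hlt; exact absurd ((hE x x).1.1 hlt) (not_lt.2 hx)
      rw [← NNReal.coe_inj, Real.coe_toNNReal _ (hnn x), (hc x).1 hzx, hφv x hx]
    · rw [Real.coe_toNNReal _ (hnn x), ← hφ.map_nat h0 M]
      exact hφ.mono ((hc x).2 ((hE x x).1.2 hx))

/-- Up to clipping at `M`, the `approxZ` abstraction reaches nothing that is not reachable. -/
lemma exists_reachB_approxZ [Finite Y] {M : ℕ} {gs : ℕ → Guard Y} {Rs : ℕ → Set Y}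
    (hgs : ∀ i, ∀ c ∈ gs i, c.bound ≤ M) (i : ℕ) :
    ∀ v ∈ absSeq (approxZ M) gs Rs i, ∃ u ∈ reachB M gs Rs i, Clip M v u := by
  have hcc : ∀ i, ConvexVal (absSeq (approxZ M) gs Rs i) ∧
      CellInv (absSeq (approxZ M) gs Rs i) := by
    intro i
    cases i with
    | zero => exact ⟨convexVal_zero, cellInv_zero⟩
    | succ i => exact ⟨convexVal_approxZ _ _, (unionOfClasses_approxZ _ _).cellInv⟩
  induction i with
  | zero => exact fun v hv => ⟨v, hv, fun x => ⟨fun _ => rfl, fun h => h⟩⟩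
  | succ i ih =>
    intro v hv
    obtain ⟨z, hz, hvz⟩ := exists_clip_of_mem_approxZ (hcc i).1.succSet
      ((hcc i).2.succSet fun _ _ _ _ _ _ _ => trivial) hv
    obtain ⟨u, hu, hc⟩ := exists_reachB_succ hgs ih hz
    exact ⟨u, hu, hvz.trans hc⟩

end Dynamics

/-! ### Compactness for sequences of delays -/

section Compactness

open Filter

lemma int_add_le_int_add_iff {p q : ℤ} {a b : ℝ} (ha : 0 ≤ a) (ha1 : a < 1) (hb : 0 ≤ b)
    (hb1 : b < 1) : (p : ℝ) + a ≤ q + b ↔ p < q ∨ p = q ∧ a ≤ b := by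
  rcases lt_trichotomy p q with h | h | h
  · have : (p : ℝ) + 1 ≤ q := by exact_mod_cast h
    exact ⟨fun _ => Or.inl h, fun _ => by linarith⟩
  · subst h; simp
  · have h' : (q : ℝ) + 1 ≤ p := by exact_mod_cast h
    refine ⟨fun h2 => by linarith, ?_⟩
    rintro (h2 | h2) <;> omega

/-- A pointwise bounded sequence of time sequences has a limit sequence which realises every integer
difference constraint (strict or not) holding for almost all of its members. The integer parts
are constant along an ultrafilter; the ultrafilter also totally preorders the fractional parts,
and every total preorder on `ℕ` is realised inside `[0, 1)`. -/
lemma exists_limit_times (τ : ℕ → ℕ → ℝ) (hb : ∀ i, ∃ B : ℝ, ∀ n, |τ n i| ≤ B) :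
    ∃ T : ℕ → ℝ, ∀ i j (c : ℤ),
      T i ≤ T j + c ↔ ∀ᶠ n in (hyperfilter ℕ : Filter ℕ), τ n i ≤ τ n j + c := by
  have hk : ∀ i, ∃ k : ℤ, ∀ᶠ n in (hyperfilter ℕ : Filter ℕ), ⌊τ n i⌋ = k := by
    intro i
    obtain ⟨B, hB⟩ := hb i
    have := (Ultrafilter.eventually_exists_mem_iff (f := hyperfilter ℕ)
      (P := fun k n => ⌊τ n i⌋ = k) (Set.finite_Icc ⌊-B⌋ ⌊B⌋)).1
      (Eventually.of_forall fun n => ⟨_, ⟨Int.floor_mono (neg_le_of_abs_le (hB n)),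
        Int.floor_mono (le_of_abs_le (hB n))⟩, rfl⟩)
    obtain ⟨k, -, hk⟩ := this
    exact ⟨k, hk⟩
  choose k hk using hk
  let le (i j : ℕ) : Prop :=
    ∀ᶠ n in (hyperfilter ℕ : Filter ℕ), Int.fract (τ n i) ≤ Int.fract (τ n j)
  have le_trans' : ∀ i j l, le i j → le j l → le i l := fun i j l h h' => by
    filter_upwards [h, h'] with n h1 h2 using h1.trans h2
  have le_total' : ∀ i j, ¬ le i j → le j i := fun i j h => by
    filter_upwards [Ultrafilter.eventually_not.2 h] with n hn using (not_le.1 hn).le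
  classical
  let F (i j : ℕ) : ℝ := if le i j then 0 else (1 / 2) ^ j
  have hF0 : ∀ i j, 0 ≤ F i j := fun i j => by
    simp only [F]; split_ifs <;> positivity
  have hF1 : ∀ i j, F i j ≤ (1 / 2) ^ j := fun i j => by
    simp only [F]; split_ifs
    · positivity
    · exact le_rfl
  have hFs : ∀ i, Summable (F i) := fun i =>
    Summable.of_nonneg_of_le (hF0 i) (hF1 i) summable_geometric_two
  have hFm : ∀ i j, le i j → ∀ l, F i l ≤ F j l := by
    intro i j hij l
    by_cases h : le i l
    · simpa only [F, h, if_true] using hF0 j l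
    · have : ¬ le j l := fun h' => h (le_trans' _ _ _ hij h')
      simp only [F, h, this, if_false, le_refl]
  -- the factor `1 / 4` keeps the total weight below `1`
  let f (i : ℕ) : ℝ := 1 / 4 * ∑' j, F i j
  have hf0 : ∀ i, 0 ≤ f i := fun i => mul_nonneg (by norm_num) (tsum_nonneg (hF0 i))
  have hf1 : ∀ i, f i < 1 := fun i => by
    have := Summable.tsum_le_tsum (hF1 i) (hFs i) summable_geometric_two
    rw [tsum_geometric_two] at this
    simp only [f]; linarith
  have hf : ∀ i j, f i ≤ f j ↔ le i j := by
    intro i j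
    constructor
    · intro hij
      by_contra hn
      have hji := le_total' _ _ hn
      have hself : le j j := Eventually.of_forall fun n => le_rfl
      have := Summable.tsum_lt_tsum (i := j) (hFm j i hji)
        (by simp only [F, hn, hself, if_true, if_false]; positivity) (hFs j) (hFs i)
      simp only [f] at hij; linarith
    · intro hij
      have := Summable.tsum_le_tsum (hFm i j hij) (hFs i) (hFs j)
      simp only [f]; linarith
  refine ⟨fun i => k i + f i, fun i j c => ?_⟩
  have h1 : (k i : ℝ) + f i ≤ (k j : ℝ) + f j + c ↔ k i < k j + c ∨ k i = k j + c ∧ le i j := by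
    rw [← hf, ← int_add_le_int_add_iff (hf0 i) (hf1 i) (hf0 j) (hf1 j)]
    push_cast
    rw [add_right_comm]
  have h2 : ∀ᶠ n in (hyperfilter ℕ : Filter ℕ), (τ n i ≤ τ n j + c ↔
      k i < k j + c ∨ k i = k j + c ∧ Int.fract (τ n i) ≤ Int.fract (τ n j)) := by
    filter_upwards [hk i, hk j] with n hi hj
    rw [← int_add_le_int_add_iff (Int.fract_nonneg _) (Int.fract_lt_one _) (Int.fract_nonneg _)
      (Int.fract_lt_one _), ← hi, ← hj]
    push_cast
    rw [add_right_comm, Int.floor_add_fract, Int.floor_add_fract]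
  rw [h1, eventually_congr h2]
  by_cases hlt : k i < k j + c
  · simp [hlt]
  · by_cases heq : k i = k j + c <;> simp [hlt, heq, le, (hyperfilter ℕ).neBot.ne]

lemma eventually_sat_iff {τ : ℕ → ℕ → ℝ} {T : ℕ → ℝ} (hT : ∀ i j (c : ℤ),
      T i ≤ T j + c ↔ ∀ᶠ n in (hyperfilter ℕ : Filter ℕ), τ n i ≤ τ n j + c)
    (o : CmpOp) (i j c : ℕ) : CmpOp.sat o (T i - T j) c ↔
      ∀ᶠ n in (hyperfilter ℕ : Filter ℕ), CmpOp.sat o (τ n i - τ n j) c := by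
  have hle : T i - T j ≤ c ↔ ∀ᶠ n in (hyperfilter ℕ : Filter ℕ), τ n i - τ n j ≤ c := by
    have := hT i j c
    simpa only [sub_le_iff_le_add', Int.cast_natCast] using this
  have hge : c ≤ T i - T j ↔ ∀ᶠ n in (hyperfilter ℕ : Filter ℕ), c ≤ τ n i - τ n j := by
    have := hT j i (-c)
    simpa only [Int.cast_neg, Int.cast_natCast, ← sub_eq_add_neg, le_sub_comm] using this
  cases o <;> simp only [CmpOp.sat, ge_iff_le, gt_iff_lt]
  · rw [← not_le, hge, ← Ultrafilter.eventually_not]; simp only [not_le]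
  · exact hle
  · rw [le_antisymm_iff, hle, hge, ← eventually_and]; simp only [le_antisymm_iff]
  · exact hge
  · rw [← not_le, hle, ← Ultrafilter.eventually_not]; simp only [not_le]

/-- The valuation after `i` steps with resets `Rs` and delays `ds`, from the zero valuation. -/
noncomputable def runVal {X : Type} (Rs : ℕ → Set X) (ds : ℕ → NNReal) : ℕ → ClockVal X
  | 0 => zeroVal X
  | i + 1 => resetVal (Rs i) (ClockVal.add (runVal Rs ds i) (ds i))

lemma runVal_congr {X : Type} {Rs : ℕ → Set X} {ds ds' : ℕ → NNReal} {i : ℕ}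
    (h : ∀ k < i, ds k = ds' k) : runVal Rs ds i = runVal Rs ds' i := by
  induction i with
  | zero => rfl
  | succ i ih => simp only [runVal, ih fun k hk => h k (by omega), h i (by omega)]

open Classical in
/-- The index of the time point of the last reset of `x` before step `i`. -/
noncomputable def lastReset {X : Type} (Rs : ℕ → Set X) (x : X) : ℕ → ℕ
  | 0 => 0
  | i + 1 => if x ∈ Rs i then i + 1 else lastReset Rs x i

lemma runVal_eq_sub {X : Type} {Rs : ℕ → Set X} {ds : ℕ → NNReal} {T : ℕ → ℝ}
    (hT : ∀ i, (ds i : ℝ) = T (i + 1) - T i) (i : ℕ) (x : X) :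
    (runVal Rs ds i x : ℝ) = T i - T (lastReset Rs x i) := by
  induction i with
  | zero => simp [runVal, lastReset, zeroVal]
  | succ i ih =>
    by_cases hx : x ∈ Rs i
    · simp [runVal, lastReset, resetVal, hx]
    · simp only [runVal, lastReset, resetVal, hx, if_false, ClockVal.add, NNReal.coe_add, ih, hT]
      ring

lemma add_runVal_eq_sub {X : Type} {Rs : ℕ → Set X} {ds : ℕ → NNReal} {T : ℕ → ℝ}
    (hT : ∀ i, (ds i : ℝ) = T (i + 1) - T i) (i : ℕ) (x : X) :
    (ClockVal.add (runVal Rs ds i) (ds i) x : ℝ) = T (i + 1) - T (lastReset Rs x i) := by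
  simp only [ClockVal.add, NNReal.coe_add, runVal_eq_sub hT, hT]
  ring

/-- If every finite prefix of a sequence of guards and resets is feasible with uniformly bounded
delays, the whole sequence is feasible. -/
lemma exists_delays_of_prefixes {X : Type} (gs : ℕ → Guard X) (Rs : ℕ → Set X) (B : NNReal)
    (h : ∀ n, ∃ ds : ℕ → NNReal, (∀ i, ds i ≤ B) ∧
      ∀ i < n, Guard.sat (gs i) (ClockVal.add (runVal Rs ds i) (ds i))) :
    ∃ ds : ℕ → NNReal, ∀ i, Guard.sat (gs i) (ClockVal.add (runVal Rs ds i) (ds i)) := by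
  choose ds hB hg using h
  let τ (n i : ℕ) : ℝ := ∑ l ∈ Finset.range i, (ds n l : ℝ)
  have hτ : ∀ n i, (ds n i : ℝ) = τ n (i + 1) - τ n i := fun n i => by
    simp [τ, Finset.sum_range_succ]
  obtain ⟨T, hT⟩ := exists_limit_times τ fun i => ⟨i * B, fun n => by
    have hnn : 0 ≤ τ n i := Finset.sum_nonneg fun l _ => (ds n l).2
    rw [abs_of_nonneg hnn]
    calc τ n i ≤ ∑ l ∈ Finset.range i, (B : ℝ) :=
          Finset.sum_le_sum fun l _ => by exact_mod_cast hB n l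
      _ = i * B := by simp⟩
  have hmono : ∀ i, 0 ≤ T (i + 1) - T i := fun i => by
    have := (hT i (i + 1) 0).2 (Eventually.of_forall fun n => by
      have := hτ n i
      have h0 : (0 : ℝ) ≤ ds n i := (ds n i).2
      push_cast; linarith)
    push_cast at this; linarith
  refine ⟨fun i => Real.toNNReal (T (i + 1) - T i), fun i c hc => ?_⟩
  rw [add_runVal_eq_sub (T := T) fun i => Real.coe_toNNReal _ (hmono i),
    eventually_sat_iff hT]
  have hev : ∀ᶠ n in (hyperfilter ℕ : Filter ℕ), i < n :=
    Nat.hyperfilter_le_atTop (eventually_gt_atTop i)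
  filter_upwards [hev] with n hn
  rw [← add_runVal_eq_sub (hτ n)]
  exact hg n i hn c hc

end Compactness

/-! ### Feasibility of finite prefixes -/

section Projection

lemma exists_delays_of_mem_reachB {Y : Type} {M : ℕ} {gs : ℕ → Guard Y} {Rs : ℕ → Set Y} {i : ℕ} :
    ∀ u ∈ reachB M gs Rs i, ∃ ds : ℕ → NNReal, (∀ k, ds k ≤ M + 1) ∧
      (∀ k < i, Guard.sat (gs k) (ClockVal.add (runVal Rs ds k) (ds k))) ∧
      runVal Rs ds i = u := by
  induction i with
  | zero => exact fun u hu => ⟨fun _ => 0, by simp, by simp, hu.symm⟩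
  | succ i ih =>
    rintro _ ⟨v, hv, d, hd, hg, rfl⟩
    obtain ⟨ds, hB, hs, rfl⟩ := ih v hv
    have hval : ∀ k ≤ i, runVal Rs (Function.update ds i d) k = runVal Rs ds k := fun k hk =>
      runVal_congr fun l hl => Function.update_of_ne (by omega) _ _
    refine ⟨Function.update ds i d, fun k => ?_, fun k hk => ?_, ?_⟩
    · rcases eq_or_ne k i with rfl | hk
      · simpa using hd
      · simpa [hk] using hB k
    · rw [hval k (by omega)]
      rcases eq_or_ne k i with rfl | hk'
      · simpa using hg
      · simpa [hk'] using hs k (by omega)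
    · simp [runVal, hval i le_rfl]

variable {X : Type} (Y : Finset X)

/-- Restriction of a valuation to the clocks in `Y`. -/
def restr (v : ClockVal X) : ClockVal Y := fun y => v y.1

open Classical in
/-- The constraints of `g` that only speak about clocks in `Y`, as a guard over `Y`. -/
noncomputable def restrGuard (g : Guard X) : Guard Y :=
  g.filterMap fun c => if h : c.clock ∈ Y then some ⟨⟨c.clock, h⟩, c.cmp, c.bound⟩ else none

variable {Y}

lemma mem_restrGuard {g : Guard X} {c : AtomicConstraint Y} :
    c ∈ restrGuard Y g ↔ (⟨c.clock.1, c.cmp, c.bound⟩ : AtomicConstraint X) ∈ g := by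
  simp only [restrGuard, List.mem_filterMap]
  constructor
  · rintro ⟨a, ha, h⟩
    split_ifs at h with hY
    cases h
    exact ha
  · intro h
    exact ⟨_, h, by simp⟩

lemma sat_restrGuard {g : Guard X} (hg : ∀ c ∈ g, c.clock ∈ Y) (v : ClockVal X) :
    Guard.sat (restrGuard Y g) (restr Y v) ↔ Guard.sat g v :=
  ⟨fun h c hc => h ⟨⟨c.clock, hg c hc⟩, c.cmp, c.bound⟩ (mem_restrGuard.2 hc),
    fun h _ hc => h _ (mem_restrGuard.1 hc)⟩

lemma restr_resetVal (R : Set X) (v : ClockVal X) :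
    restr Y (resetVal R v) = resetVal {y : Y | y.1 ∈ R} (restr Y v) := by
  ext y; by_cases h : y.1 ∈ R <;> simp [restr, resetVal, h]

lemma restr_runVal (Rs : ℕ → Set X) (ds : ℕ → NNReal) (i : ℕ) :
    restr Y (runVal Rs ds i) = runVal (fun i => {y : Y | y.1 ∈ Rs i}) ds i := by
  induction i with
  | zero => rfl
  | succ i ih =>
    simp only [runVal, restr_resetVal, ← ih]
    rfl

/-- `op'` on valuations over `Y` is at least as coarse as `op` on valuations over `X`. -/
def Coarser (op : Set (ClockVal X) → Set (ClockVal X))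
    (op' : Set (ClockVal Y) → Set (ClockVal Y)) : Prop :=
  ∀ S S', (∀ v ∈ S, restr Y v ∈ S') → ∀ v ∈ op S, restr Y v ∈ op' S'

lemma coarser_closureR (M : ℕ) : Coarser (Y := Y) (closureR M) (closureR M) := by
  rintro S S' h v' ⟨v, hv, hE⟩
  exact ⟨_, h v hv, fun x y => hE x.1 y.1⟩

lemma coarser_closureD (M : ℕ) : Coarser (Y := Y) (closureD M) (closureR M) := by
  rintro S S' h v' ⟨v, hv, hE⟩
  exact ⟨_, h v hv, fun x y => hE.regEquiv x.1 y.1⟩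

lemma coarser_approxZ (M : ℕ) : Coarser (Y := Y) (approxZ M) (approxZ M) := by
  rintro S S' h v hv K ⟨hSK, hconv, hcl⟩
  refine hv {w | restr Y w ∈ K} ⟨fun w hw => hSK (h w hw), ?_, ?_⟩
  · exact fun u hu w hw θ hθ => hconv _ hu _ hw θ hθ
  · exact fun u hu u' hE => hcl _ hu _ ⟨fun x => hE.1 x.1, fun x y => hE.2 x.1 y.1⟩

/-- Along a path of a simulation graph, the first `n` transitions can be taken one after the
other with delays at most `M + 1`. The projection to the finitely many clocks tested by these
transitions reduces this to the case of finitely many clocks. -/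
lemma exists_delays_prefix {Q : Type} {A : TBA Q X} {M : ℕ} (hM : A.BoundsConsts M)
    {op : Set (ClockVal X) → Set (ClockVal X)}
    (hop : op ∈ ({closureR M, closureD M, approxZ M} :
        Set (Set (ClockVal X) → Set (ClockVal X))))
    {nodes : ℕ → RNode Q X} {ts : ℕ → TBATrans Q X} (h0 : nodes 0 = ZGInit A)
    (hstep : ∀ i, SGTrans A op (ts i) (nodes i) (nodes (i + 1))) (n : ℕ) :
    ∃ ds : ℕ → NNReal, (∀ i, ds i ≤ M + 1) ∧ ∀ i < n, Guard.sat (ts i).guard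
      (ClockVal.add (runVal (fun i => (ts i).reset) ds i) (ds i)) := by
  classical
  let Y : Finset X := (Finset.range n).biUnion fun i => ((ts i).guard.map (·.clock)).toFinset
  have hY : ∀ i < n, ∀ c ∈ (ts i).guard, c.clock ∈ Y := fun i hi c hc =>
    Finset.mem_biUnion.2 ⟨i, Finset.mem_range.2 hi, by
      rw [List.mem_toFinset]; exact List.mem_map_of_mem hc⟩
  let gs (i : ℕ) : Guard Y := restrGuard Y (ts i).guard
  let Rs (i : ℕ) : Set Y := {y | y.1 ∈ (ts i).reset}
  have htr : ∀ i, ts i ∈ A.trans := fun i => by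
    obtain ⟨_, _, _, _, h, _⟩ := (hstep i).1; exact h
  have hgs : ∀ i, ∀ c ∈ gs i, c.bound ≤ M := fun i c hc =>
    hM _ (htr i) _ (mem_restrGuard.1 hc)
  have hpath : ∀ op' : Set (ClockVal Y) → Set (ClockVal Y), Coarser op op' →
      ∀ i ≤ n, ∀ v ∈ (nodes i).2, restr Y v ∈ absSeq op' gs Rs i := by
    intro op' hc i
    induction i with
    | zero => rw [h0]; rintro - v rfl; rfl
    | succ i ih =>
      intro hi
      rw [(hstep i).2]
      refine hc _ _ ?_
      rintro _ ⟨w, hw, d, -, -, -, hg, rfl⟩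
      exact ⟨restr Y w, ih (by omega) w hw, d, trivial,
        (sat_restrGuard (hY i (by omega)) _).2 hg, restr_resetVal _ _⟩
  obtain ⟨_, v, hv, _⟩ := (hstep n).1
  have hreach : ∃ u, u ∈ reachB M gs Rs n := by
    rcases hop with rfl | rfl | rfl
    · obtain ⟨u, hu, -⟩ := exists_reachB_closureR hgs n _
        (hpath _ (coarser_closureR M) n le_rfl v hv)
      exact ⟨u, hu⟩
    · obtain ⟨u, hu, -⟩ := exists_reachB_closureR hgs n _
        (hpath _ (coarser_closureD M) n le_rfl v hv)
      exact ⟨u, hu⟩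
    · obtain ⟨u, hu, -⟩ := exists_reachB_approxZ hgs n _
        (hpath _ (coarser_approxZ M) n le_rfl v hv)
      exact ⟨u, hu⟩
  obtain ⟨u, hu⟩ := hreach
  obtain ⟨ds, hB, hs, -⟩ := exists_delays_of_mem_reachB u hu
  refine ⟨ds, hB, fun i hi => (sat_restrGuard (hY i hi) _).1 ?_⟩
  have := hs i hi
  rw [← restr_runVal (fun i => (ts i).reset)] at this
  exact this

lemma subset_op {M : ℕ} {op : Set (ClockVal X) → Set (ClockVal X)}
    (hop : op ∈ ({closureR M, closureD M, approxZ M} :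
        Set (Set (ClockVal X) → Set (ClockVal X)))) (S : Set (ClockVal X)) : S ⊆ op S := by
  intro v hv
  rcases hop with rfl | rfl | rfl
  · exact ⟨v, hv, fun x y => by simp⟩
  · exact ⟨v, hv, by simp [DRegEquiv]⟩
  · exact fun K hK => hK.1 hv

end Projection

/-- every infinite path of `SG(A)` starting from its initial node
is an abstraction of a run of `A`; similarly for `SG^d(A)` and `SG^a(A)`. -/
theorem sim_path_abstracts_run
    {Q X : Type} (A : TBA Q X) (M : ℕ) (hM : A.IsMaxConst M) :
    ∀ op ∈ ({closureR M, closureD M, approxZ M} :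
        Set (Set (ClockVal X) → Set (ClockVal X))),
      ∀ (nodes : ℕ → RNode Q X) (ts : ℕ → TBATrans Q X),
        nodes 0 = ZGInit A →
        (∀ i, SGTrans A op (ts i) (nodes i) (nodes (i + 1))) →
        ∃ (st : ℕ → Q × ClockVal X) (ds : ℕ → NNReal),
          IsRun A st ds ts ∧ (∀ i, (st i).1 = (nodes i).1) ∧
          (∀ i, (st i).2 ∈ (nodes i).2) := by
  intro op hop nodes ts h0 hstep
  obtain ⟨ds, hds⟩ := exists_delays_of_prefixes (fun i => (ts i).guard) (fun i => (ts i).reset)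
    (M + 1) (exists_delays_prefix hM.1 hop h0 hstep)
  have hS : ∀ i, A.Step (ts i) (ds i) ((nodes i).1, runVal (fun i => (ts i).reset) ds i)
      ((nodes (i + 1)).1, runVal (fun i => (ts i).reset) ds (i + 1)) := fun i => by
    obtain ⟨_, _, _, _, htr, hsrc, hdst, _⟩ := (hstep i).1
    exact ⟨htr, hsrc, hdst, hds i, rfl⟩
  refine ⟨fun i => ((nodes i).1, runVal (fun i => (ts i).reset) ds i), ds, ⟨?_, hS⟩,
    fun _ => rfl, fun i => ?_⟩
  · simp only [h0]; rfl
  · induction i with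
    | zero => rw [h0]; rfl
    | succ i ih =>
      rw [(hstep i).2]
      exact subset_op hop _ ⟨_, ih, ds i, hS i⟩
end

section
/- For every d≥1 there is a constant c such that for every n≥2 there exists a Timed Büchi Automaton A_n with n+1 clocks whose maximal guard constant is d, such that the zone graph ZG^a(A_n) has at most c·n reachable nodes, while the zone graph ZG^a(SNZ(A_n)) of its strongly non-Zeno transformation has at least (d+1)^{n-1} reachable nodes. -/
/-! ### The chain automaton -/

/-- The state with index `j` of a chain whose states are `0, …, n(d+2)+1`. -/
def chainState (d n j : ℕ) : Fin (n * (d + 2) + 1 + 1) := Fin.ofNat _ j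

/-- The `j`-th transition of the chain, leading from state `j` to state `j+1`. It resets the clock
`x` with `x(d+2) = j`, if there is one; only the last transition has a guard. -/
def chainTrans (d n j : ℕ) : TBATrans (Fin (n * (d + 2) + 1 + 1)) (Fin (n + 1)) where
  src := chainState d n j
  guard := if j = n * (d + 2) then [⟨Fin.last n, CmpOp.ge, d⟩] else []
  reset := {x | x.val * (d + 2) = j}
  dst := chainState d n (j + 1)

/-- The chain automaton: states `0 → 1 → ⋯ → n(d+2)+1`, all of them accepting, where every
`(d+2)`-nd transition resets a new clock. -/
def chain (d n : ℕ) : TBA (Fin (n * (d + 2) + 1 + 1)) (Fin (n + 1)) where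
  q0 := chainState d n 0
  trans := {t | ∃ j < n * (d + 2) + 1, t = chainTrans d n j}
  acc := Set.univ

lemma chainState_inj {d n i j : ℕ} (hi : i ≤ n * (d + 2) + 1) (hj : j ≤ n * (d + 2) + 1)
    (h : chainState d n i = chainState d n j) : i = j := by
  have := congrArg Fin.val h
  simp only [chainState, Fin.ofNat] at this
  rwa [Nat.mod_eq_of_lt (by omega), Nat.mod_eq_of_lt (by omega)] at this

lemma chain_isMaxConst (d n : ℕ) : (chain d n).IsMaxConst d := by
  refine ⟨?_, Or.inr ⟨chainTrans d n (n * (d + 2)), ⟨_, Nat.lt_succ_self _, rfl⟩,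
    ⟨Fin.last n, CmpOp.ge, d⟩, by simp [chainTrans], rfl⟩⟩
  rintro t ⟨j, -, rfl⟩ c hc
  simp only [chainTrans] at hc
  split_ifs at hc <;> simp_all

lemma isMaxConst_SNZ {Q X : Type} (A : TBA Q X) {d : ℕ} (hd : 1 ≤ d) (hA : A.IsMaxConst d) :
    (SNZ A).IsMaxConst d := by
  have key : ∀ t ∈ A.trans, ∀ c ∈ liftGuard t.guard, c.bound ≤ d := by
    intro t ht c hc
    simp only [liftGuard, List.mem_map] at hc
    obtain ⟨c', hc', rfl⟩ := hc
    exact hA.1 t ht c' hc'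
  refine ⟨?_, Or.inr ?_⟩
  · rintro t ((⟨t, ht, rfl⟩ | ⟨t, ht, -, rfl⟩) | ⟨a, -, rfl⟩) c hc
    · exact key t ht c hc
    · rcases List.mem_cons.1 hc with rfl | hc
      · exact hd
      · exact key t ht c hc
    · simp at hc
  · rcases hA.2 with h | ⟨t, ht, c, hc, h⟩
    · omega
    · exact ⟨_, Or.inl (Or.inl ⟨t, ht, rfl⟩), liftConstraint c, List.mem_map_of_mem hc, h⟩

/-- The zone labelling state `j` of the chain in its zone graph. -/
def chainZone (d n : ℕ) : ℕ → Set (ClockVal (Fin (n + 1)))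
  | 0 => {zeroVal _}
  | j + 1 => approxZ d (postSet (chain d n) (chainTrans d n j) (chainState d n j)
      (chainZone d n j) (chainState d n (j + 1)))

/-- The chain has a single path, so every state of it carries a single zone. -/
lemma chain_reach {d n : ℕ} : ZGReach (chain d n) d ⊆
    ((Finset.range (n * (d + 2) + 2)).image
      (fun j => (chainState d n j, chainZone d n j) : ℕ → RNode _ _) : Set _) := by
  intro a ha
  suffices h : ∃ j ≤ n * (d + 2) + 1, a = (chainState d n j, chainZone d n j) by
    obtain ⟨j, hj, rfl⟩ := h
    simp only [Finset.coe_image, Finset.coe_range, Set.mem_image, Set.mem_Iio]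
    exact ⟨j, by omega, rfl⟩
  induction ha with
  | refl => exact ⟨0, by omega, rfl⟩
  | @tail b c _ hs ih =>
    obtain ⟨j, hj, rfl⟩ := ih
    obtain ⟨t, ⟨v', v, hv, δ, ⟨i, hi, rfl⟩, hsrc, hdst, -⟩, hop⟩ := hs
    obtain rfl : i = j := chainState_inj (by omega) hj hsrc
    refine ⟨i + 1, by omega, ?_⟩
    obtain ⟨c1, c2⟩ := c
    simp only [chainTrans] at hdst
    subst hdst
    exact Prod.ext rfl hop

lemma subset_approxZ {X : Type} (M : ℕ) (Z : Set (ClockVal X)) : Z ⊆ approxZ M Z :=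
  Set.subset_sInter fun _ hS => hS.1

lemma approxZ_subset {X : Type} {M : ℕ} {Z S : Set (ClockVal X)} (h : Z ⊆ S)
    (hc : ConvexVal S) (hu : UnionOfClasses (DRegEquiv M) S) : approxZ M Z ⊆ S :=
  Set.sInter_subset_of_mem ⟨h, hc, hu⟩

/-! ### Lower bounds on clock differences -/

/-- The set `x - y ≥ k` for `k < d`, and `x - y > d - 1` for `k ≥ d`: the latter is the bound
on `x - y` implied by `x - y ≥ d` that the abstraction with maximal constant `d` retains. -/
def gapSet {X : Type} (d : ℕ) (x y : X) (k : ℕ) : Set (ClockVal X) :=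
  {v | if k < d then (k : ℝ) ≤ (v x : ℝ) - v y else (d : ℝ) - 1 < (v x : ℝ) - v y}

lemma mem_gapSet_of_le {X : Type} {d k : ℕ} {x y : X} {v : ClockVal X}
    (h : (k : ℝ) ≤ (v x : ℝ) - v y) : v ∈ gapSet d x y k := by
  simp only [gapSet, Set.mem_ofPred_eq]
  split_ifs with h'
  · exact h
  · have : (d : ℝ) ≤ k := by exact_mod_cast not_lt.1 h'
    linarith

lemma gapSet_lt {X : Type} {d k m : ℕ} (hm : m < k) (hk : k ≤ d) {x y : X} {v : ClockVal X}
    (h : v ∈ gapSet d x y k) : (m : ℝ) < (v x : ℝ) - v y := by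
  simp only [gapSet, Set.mem_ofPred_eq] at h
  split_ifs at h with h'
  · have : (m : ℝ) < k := by exact_mod_cast hm
    linarith
  · have : (m : ℝ) + 1 ≤ d := by exact_mod_cast (by omega : m + 1 ≤ d)
    linarith

lemma gapSet_mono {X : Type} {d k : ℕ} {x y x' y' : X} {v v' : ClockVal X}
    (hv : (v x : ℝ) - v y ≤ (v' x' : ℝ) - v' y') (h : v ∈ gapSet d x y k) :
    v' ∈ gapSet d x' y' k := by
  simp only [gapSet, Set.mem_ofPred_eq] at h ⊢
  split_ifs at h ⊢ <;> linarith

lemma gapSet_convex {X : Type} (d k : ℕ) (x y : X) : ConvexVal (gapSet d x y k) := by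
  intro u hu w hw θ hθ
  have e : ∀ a b c e : ℝ, θ * a + (1 - θ) * b - (θ * c + (1 - θ) * e)
      = (θ : ℝ) * (a - c) + (1 - θ) * (b - e) := by intros; ring
  have h0 : (0 : ℝ) ≤ θ := θ.2
  have h1 : (0 : ℝ) ≤ 1 - θ := sub_nonneg.2 (by exact_mod_cast hθ)
  simp only [gapSet, Set.mem_ofPred_eq] at hu hw ⊢
  push_cast [NNReal.coe_sub hθ]
  rw [e]
  split_ifs at hu hw ⊢
  · exact (convex_Ici (k : ℝ)) hu hw h0 h1 (by ring)
  · exact (convex_Ioi ((d : ℝ) - 1)) hu hw h0 h1 (by ring)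

lemma gapSet_union {X : Type} {d : ℕ} (hd : 1 ≤ d) (k : ℕ) (x y : X) :
    UnionOfClasses (DRegEquiv d) (gapSet d x y k) := by
  intro v hv v' h
  simp only [gapSet, Set.mem_ofPred_eq] at hv ⊢
  split_ifs at hv ⊢ with hk
  · have := h.2 y x (-(k : ℤ)) (by omega) (by omega)
    push_cast at this
    have := this.1 (by linarith)
    linarith
  · have := h.2 x y ((d : ℤ) - 1) (by omega) (by omega)
    push_cast at this
    by_contra hc
    have := this.2 (not_lt.1 hc)
    linarith

/-! ### Paths in the strongly non-Zeno chain -/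

/-- For each `i`, the transitions `i(d+2)+1, …, i(d+2)+k i+1` of the chain (for `k i ≤ d`). These
are the ones taken with the guard `z ≥ 1` along the path encoding `k`. -/
def viaAcc (d : ℕ) (k : ℕ → ℕ) (j : ℕ) : Prop :=
  1 ≤ j % (d + 2) ∧ j % (d + 2) ≤ k (j / (d + 2)) + 1

lemma viaAcc_iff {d : ℕ} (k : ℕ → ℕ) (i : ℕ) {r : ℕ} (hr : r < d + 2) :
    viaAcc d k (i * (d + 2) + r) ↔ 1 ≤ r ∧ r ≤ k i + 1 := by
  have h1 : (i * (d + 2) + r) % (d + 2) = r := by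
    rw [mul_comm, Nat.mul_add_mod, Nat.mod_eq_of_lt hr]
  have h2 : (i * (d + 2) + r) / (d + 2) = i := by
    rw [mul_comm, Nat.mul_add_div (by omega), Nat.div_eq_of_lt hr, add_zero]
  rw [viaAcc, h1, h2]

/-- The copy of the `j`-th transition that ignores the clock `z`. -/
def plainTrans (d n j : ℕ) : TBATrans (Fin (n * (d + 2) + 1 + 1) ⊕ Fin (n * (d + 2) + 1 + 1))
    (Option (Fin (n + 1))) :=
  ⟨Sum.inl (chainTrans d n j).src, liftGuard (chainTrans d n j).guard,
    some '' (chainTrans d n j).reset, Sum.inl (chainTrans d n j).dst⟩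

/-- The copy of the `j`-th transition that checks `z ≥ 1` and resets `z`. -/
def accTrans (d n j : ℕ) : TBATrans (Fin (n * (d + 2) + 1 + 1) ⊕ Fin (n * (d + 2) + 1 + 1))
    (Option (Fin (n + 1))) :=
  ⟨Sum.inl (chainTrans d n j).src, ⟨none, CmpOp.ge, 1⟩ :: liftGuard (chainTrans d n j).guard,
    insert none (some '' (chainTrans d n j).reset), Sum.inr (chainTrans d n j).dst⟩

/-- The transition from the accepting copy of state `j` to its non-accepting copy. -/
def backTrans (d n j : ℕ) : TBATrans (Fin (n * (d + 2) + 1 + 1) ⊕ Fin (n * (d + 2) + 1 + 1))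
    (Option (Fin (n + 1))) :=
  ⟨Sum.inr (chainState d n j), [], ∅, Sum.inl (chainState d n j)⟩

open Classical in
/-- The zone at the non-accepting copy of state `j` along the path encoding `k`. -/
noncomputable def pathZone (d n : ℕ) (k : ℕ → ℕ) : ℕ → Set (ClockVal (Option (Fin (n + 1))))
  | 0 => {zeroVal _}
  | j + 1 =>
    if viaAcc d k j then
      approxZ d (postSet (SNZ (chain d n)) (backTrans d n (j + 1))
        (Sum.inr (chainState d n (j + 1)))
        (approxZ d (postSet (SNZ (chain d n)) (accTrans d n j) (Sum.inl (chainState d n j))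
          (pathZone d n k j) (Sum.inr (chainState d n (j + 1)))))
        (Sum.inl (chainState d n (j + 1))))
    else
      approxZ d (postSet (SNZ (chain d n)) (plainTrans d n j) (Sum.inl (chainState d n j))
        (pathZone d n k j) (Sum.inl (chainState d n (j + 1))))

/-- The clocks reset by the `j`-th move of the path encoding `k`. -/
def pathReset (d n : ℕ) (k : ℕ → ℕ) (j : ℕ) : Set (Option (Fin (n + 1))) :=
  {x | (x = none ∧ viaAcc d k j) ∨ ∃ y : Fin (n + 1), x = some y ∧ y.val * (d + 2) = j}

lemma pathReset_acc {d n : ℕ} {k : ℕ → ℕ} {j : ℕ} (h : viaAcc d k j) :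
    (accTrans d n j).reset = pathReset d n k j := by
  ext x; cases x <;> simp [accTrans, pathReset, chainTrans, h]

lemma pathReset_plain {d n : ℕ} {k : ℕ → ℕ} {j : ℕ} (h : ¬ viaAcc d k j) :
    (plainTrans d n j).reset = pathReset d n k j := by
  ext x; cases x <;> simp [plainTrans, pathReset, chainTrans, h]

lemma chain_guard {d n j : ℕ} (hj : j < n * (d + 2)) : (chainTrans d n j).guard = [] := by
  simp [chainTrans, hj.ne]

/-- A concrete move from a valuation of the current zone shows that the next zone of the path is
reachable, and lands in it. -/
lemma path_step {d n : ℕ} {k : ℕ → ℕ} {j : ℕ} (hj : j < n * (d + 2))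
    {v : ClockVal (Option (Fin (n + 1)))} {δ : NNReal} (hv : v ∈ pathZone d n k j)
    (hz : viaAcc d k j → 1 ≤ v none + δ)
    (hr : (Sum.inl (chainState d n j), pathZone d n k j) ∈ ZGReach (SNZ (chain d n)) d) :
    resetVal (pathReset d n k j) (v.add δ) ∈ pathZone d n k (j + 1) ∧
    (Sum.inl (chainState d n (j + 1)), pathZone d n k (j + 1)) ∈
      ZGReach (SNZ (chain d n)) d := by
  have hmem : chainTrans d n j ∈ (chain d n).trans := ⟨j, by omega, rfl⟩
  by_cases h : viaAcc d k j
  · have e : pathZone d n k (j + 1) = _ := if_pos h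
    have h1 : resetVal (pathReset d n k j) (v.add δ) ∈ postSet (SNZ (chain d n)) (accTrans d n j)
        (Sum.inl (chainState d n j)) (pathZone d n k j) (Sum.inr (chainState d n (j + 1))) := by
      refine ⟨v, hv, δ, Or.inl (Or.inr ⟨_, hmem, trivial, rfl⟩), rfl, rfl, ?_, ?_⟩
      · intro c hc
        simp only [accTrans, chain_guard hj, liftGuard, List.map_nil, List.mem_singleton] at hc
        subst hc
        simp only [CmpOp.sat, ClockVal.add, Nat.cast_one, ge_iff_le]
        exact_mod_cast hz h
      · rw [pathReset_acc h]
    have h2 : resetVal (pathReset d n k j) (v.add δ) ∈ postSet (SNZ (chain d n))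
        (backTrans d n (j + 1)) (Sum.inr (chainState d n (j + 1)))
        (approxZ d (postSet (SNZ (chain d n)) (accTrans d n j) (Sum.inl (chainState d n j))
          (pathZone d n k j) (Sum.inr (chainState d n (j + 1)))))
        (Sum.inl (chainState d n (j + 1))) := by
      refine ⟨_, subset_approxZ _ _ h1, 0, Or.inr ⟨_, trivial, rfl⟩, rfl, rfl, ?_, ?_⟩
      · intro c hc
        simp [backTrans] at hc
      · funext x
        simp [backTrans, resetVal, ClockVal.add]
    rw [e]
    refine ⟨subset_approxZ _ _ h2, ?_⟩
    exact (hr.tail ⟨accTrans d n j, ⟨⟨_, h1⟩, rfl⟩⟩ :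
      Relation.ReflTransGen _ _ (Sum.inr (chainState d n (j + 1)), _)).tail
        ⟨backTrans d n (j + 1), ⟨⟨_, h2⟩, rfl⟩⟩
  · have e : pathZone d n k (j + 1) = _ := if_neg h
    have h1 : resetVal (pathReset d n k j) (v.add δ) ∈ postSet (SNZ (chain d n))
        (plainTrans d n j) (Sum.inl (chainState d n j)) (pathZone d n k j)
        (Sum.inl (chainState d n (j + 1))) := by
      refine ⟨v, hv, δ, Or.inl (Or.inl ⟨_, hmem, rfl⟩), rfl, rfl, ?_, ?_⟩
      · intro c hc
        simp [plainTrans, chain_guard hj, liftGuard] at hc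
      · rw [pathReset_plain h]
    rw [e]
    exact ⟨subset_approxZ _ _ h1, hr.tail ⟨plainTrans d n j, ⟨⟨_, h1⟩, rfl⟩⟩⟩

/-- An invariant is transported along a move of the path if it is convex, a union of d-regions and
closed under time elapse; the last condition accounts for the transition from the accepting to the
non-accepting copy. -/
lemma path_inv {d n : ℕ} {k : ℕ → ℕ} {j : ℕ} {P P' : Set (ClockVal (Option (Fin (n + 1))))}
    (hP : pathZone d n k j ⊆ P) (hc : ConvexVal P') (hu : UnionOfClasses (DRegEquiv d) P')
    (he : ∀ v ∈ P', ∀ δ, ClockVal.add v δ ∈ P')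
    (hs : ∀ v ∈ P, ∀ δ, (viaAcc d k j → 1 ≤ v none + δ) →
      resetVal (pathReset d n k j) (v.add δ) ∈ P') :
    pathZone d n k (j + 1) ⊆ P' := by
  by_cases h : viaAcc d k j
  · rw [show pathZone d n k (j + 1) = _ from if_pos h]
    refine approxZ_subset ?_ hc hu
    rintro _ ⟨v, hv, δ, -, -, -, -, hv'⟩
    simp only at hv'
    have hv1 : v ∈ P' := by
      refine approxZ_subset ?_ hc hu hv
      rintro _ ⟨w, hw, ε, -, -, -, hg, hw'⟩
      simp only at hw' hg
      subst hw'
      rw [pathReset_acc h]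
      refine hs w (hP hw) ε fun _ => ?_
      have := hg ⟨none, CmpOp.ge, 1⟩ (by simp [accTrans])
      simp only [CmpOp.sat, ClockVal.add, Nat.cast_one, ge_iff_le] at this
      exact_mod_cast this
    have : resetVal (backTrans d n (j + 1)).reset (v.add δ) = v.add δ := by
      funext x
      simp [backTrans, resetVal]
    rw [hv', this]
    exact he v hv1 δ
  · rw [show pathZone d n k (j + 1) = _ from if_neg h]
    refine approxZ_subset ?_ hc hu
    rintro _ ⟨v, hv, δ, -, -, -, -, hv'⟩
    simp only at hv'
    rw [hv', pathReset_plain h]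
    exact hs v (hP hv) δ fun h' => absurd h' h

lemma some_mem_pathReset {d n : ℕ} {k : ℕ → ℕ} {j : ℕ} (x : Fin (n + 1)) :
    some x ∈ pathReset d n k j ↔ x.val * (d + 2) = j := by
  simp [pathReset]

lemma none_mem_pathReset {d n : ℕ} {k : ℕ → ℕ} {j : ℕ} :
    none ∈ pathReset d n k j ↔ viaAcc d k j := by
  simp [pathReset]

lemma resetVal_mem {X : Type} {R : Set X} {x : X} (h : x ∈ R) (v : ClockVal X) :
    resetVal R v x = 0 := if_pos h

lemma resetVal_notMem {X : Type} {R : Set X} {x : X} (h : x ∉ R) (v : ClockVal X) :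
    resetVal R v x = v x := if_neg h

lemma gapSet_elapse {X : Type} {d k : ℕ} {x y : X} : ∀ v ∈ gapSet d x y k, ∀ δ,
    ClockVal.add v δ ∈ gapSet d x y k := fun v hv δ =>
  gapSet_mono (by simp [ClockVal.add]) hv

/-! ### Separating the zones -/

/-- After the reset of `x_i` and `r + 1` further moves, of which the first `k i + 1` check and reset
`z`, the zone satisfies `x_i - z ≥ min r (k i)`, up to the precision of the abstraction. -/
lemma block_lower {d n : ℕ} (hd : 1 ≤ d) {k : ℕ → ℕ} (x : Fin (n + 1)) (r : ℕ)
    (hr : r ≤ d) : pathZone d n k (x.val * (d + 2) + r + 2) ⊆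
      gapSet d (some x) none (min r (k x.val)) := by
  have hx : ∀ r', some x ∉ pathReset d n k (x.val * (d + 2) + (r' + 1)) := by
    intro r'
    rw [some_mem_pathReset]
    omega
  induction r with
  | zero =>
    refine path_inv (P := Set.univ) (Set.subset_univ _) (gapSet_convex _ _ _ _)
      (gapSet_union hd _ _ _) gapSet_elapse ?_
    intro v _ δ _
    have hb : none ∈ pathReset d n k (x.val * (d + 2) + 0 + 1) :=
      none_mem_pathReset.2 ((viaAcc_iff k x.val (by omega : 0 + 1 < d + 2)).2 (by omega))
    refine mem_gapSet_of_le ?_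
    rw [resetVal_mem hb]
    simp
  | succ r ih =>
    refine path_inv (ih (by omega)) (gapSet_convex _ _ _ _)
      (gapSet_union hd _ _ _) gapSet_elapse ?_
    intro v hv δ hz
    have hx' := hx (r + 1)
    rw [← add_assoc] at hx'
    have hb := viaAcc_iff k x.val (by omega : r + 2 < d + 2)
    by_cases hrk : r < k x.val
    · have hb' := hb.2 (by omega)
      have hz' : (1 : ℝ) ≤ v none + δ := by exact_mod_cast hz hb'
      have hn : none ∈ pathReset d n k (x.val * (d + 2) + (r + 1) + 1) :=
        none_mem_pathReset.2 hb'
      refine mem_gapSet_of_le ?_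
      rw [resetVal_mem hn, resetVal_notMem hx', min_eq_left (by omega)]
      rw [min_eq_left (by omega)] at hv
      simp only [gapSet, Set.mem_ofPred_eq, if_pos (show r < d by omega)] at hv
      simp only [ClockVal.add, NNReal.coe_add, NNReal.coe_zero]
      push_cast
      linarith
    · have hb' : ¬ viaAcc d k (x.val * (d + 2) + (r + 2)) := fun h => by
        have := hb.1 h
        omega
      have hn : none ∉ pathReset d n k (x.val * (d + 2) + (r + 1) + 1) :=
        fun h => hb' (none_mem_pathReset.1 h)
      rw [min_eq_right (by omega)] at hv ⊢
      refine gapSet_mono ?_ hv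
      rw [resetVal_notMem hx', resetVal_notMem hn]
      simp [ClockVal.add]

/-- After clock `i+1` has been reset, the path encoding `k` keeps `x_i - x_{i+1} ≥ k i`, up to the
precision of the abstraction. -/
lemma final_lower {d n : ℕ} (hd : 1 ≤ d) {k : ℕ → ℕ} (hk : ∀ i, k i ≤ d) (x y : Fin (n + 1))
    (hxy : y.val = x.val + 1) (r : ℕ) :
    pathZone d n k (y.val * (d + 2) + r + 1) ⊆ gapSet d (some x) (some y) (k x.val) := by
  have e : y.val * (d + 2) = x.val * (d + 2) + d + 2 := by rw [hxy]; ring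
  induction r with
  | zero =>
    have h := block_lower (n := n) (k := k) hd x d le_rfl
    rw [min_eq_right (hk _), ← e] at h
    refine path_inv h (gapSet_convex _ _ _ _) (gapSet_union hd _ _ _) gapSet_elapse ?_
    intro v hv δ _
    refine gapSet_mono ?_ hv
    rw [resetVal_mem ((some_mem_pathReset y).2 rfl),
      resetVal_notMem (fun h => by have := (some_mem_pathReset _).1 h; omega)]
    simp only [ClockVal.add, NNReal.coe_add, NNReal.coe_zero]
    have := (v none).2
    have := δ.2
    simp only [NNReal.val_eq_coe] at *
    linarith
  | succ r ih =>
    refine path_inv ih (gapSet_convex _ _ _ _) (gapSet_union hd _ _ _) gapSet_elapse ?_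
    intro v hv δ _
    refine gapSet_mono ?_ hv
    rw [resetVal_notMem (fun h => by have := (some_mem_pathReset _).1 h; omega),
      resetVal_notMem (fun h => by have := (some_mem_pathReset _).1 h; omega)]
    simp [ClockVal.add]

/-- Waiting one time unit before every move is a run, so every zone of the path is nonempty and
reachable. -/
lemma run_exists {d n : ℕ} (k : ℕ → ℕ) (j : ℕ) (hj : j ≤ n * (d + 2)) :
    (∃ v, v ∈ pathZone d n k j) ∧
    (Sum.inl (chainState d n j), pathZone d n k j) ∈ ZGReach (SNZ (chain d n)) d := by
  induction j with
  | zero => exact ⟨⟨zeroVal _, rfl⟩, Relation.ReflTransGen.refl⟩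
  | succ j ih =>
    obtain ⟨⟨v, hv⟩, hr⟩ := ih (by omega)
    have := path_step (δ := 1) (by omega) hv (fun _ => le_add_self) hr
    exact ⟨⟨_, this.1⟩, this.2⟩

/-- A run inside block `i`: since `z ≥ 1` already holds when `x_i` is reset, the first move
checking `z ≥ 1` needs no delay, and each of the `k i` remaining ones costs one time unit. -/
lemma run_block {d n : ℕ} {k : ℕ → ℕ} (x : Fin (n + 1)) (hx : x.val < n) (r : ℕ)
    (hr : r ≤ d) : ∃ v ∈ pathZone d n k (x.val * (d + 2) + r + 2),
      v (some x) = (min r (k x.val) : ℕ) := by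
  have hN : x.val * (d + 2) + (d + 2) ≤ n * (d + 2) := by
    rw [← Nat.succ_mul]; exact Nat.mul_le_mul_right _ hx
  have hb0 : ¬ viaAcc d k (x.val * (d + 2)) := fun h => by
    have := (viaAcc_iff k x.val (by omega : 0 < d + 2)).1 h
    omega
  induction r with
  | zero =>
    obtain ⟨⟨v, hv⟩, hre⟩ := run_exists (d := d) (n := n) k (x.val * (d + 2)) (by omega)
    have h1 := path_step (δ := 1) (by omega) hv (fun _ => le_add_self) hre
    have h2 := path_step (δ := 0) (by omega) h1.1 (fun _ => by
      rw [resetVal_notMem (fun h => hb0 (none_mem_pathReset.1 h))]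
      simp [ClockVal.add]) h1.2
    refine ⟨_, h2.1, ?_⟩
    rw [resetVal_notMem (fun h => by have := (some_mem_pathReset _).1 h; omega)]
    simp only [ClockVal.add]
    rw [resetVal_mem ((some_mem_pathReset x).2 rfl)]
    simp
  | succ r ih =>
    obtain ⟨v, hv, hvx⟩ := ih (by omega)
    have hre := (run_exists (d := d) (n := n) k (x.val * (d + 2) + r + 2) (by omega)).2
    have hb := viaAcc_iff k x.val (by omega : r + 2 < d + 2)
    have hnx : some x ∉ pathReset d n k (x.val * (d + 2) + r + 2) :=
      fun h => by have := (some_mem_pathReset _).1 h; omega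
    by_cases hrk : r < k x.val
    · have h1 := path_step (δ := 1) (by omega) hv (fun _ => le_add_self) hre
      refine ⟨_, h1.1, ?_⟩
      rw [resetVal_notMem hnx]
      simp only [ClockVal.add]
      rw [hvx, min_eq_left (by omega), min_eq_left (by omega)]
      push_cast
      rfl
    · have h1 := path_step (δ := 0) (by omega) hv
        (fun h => by have := hb.1 h; omega) hre
      refine ⟨_, h1.1, ?_⟩
      rw [resetVal_notMem hnx]
      simp only [ClockVal.add]
      rw [hvx, min_eq_right (by omega), min_eq_right (by omega), add_zero]

/-- The lower bound `k i` on `x_i - x_{i+1}` is attained. -/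
lemma run_final {d n : ℕ} {k : ℕ → ℕ} (hk : ∀ i, k i ≤ d) (x y : Fin (n + 1))
    (hxy : y.val = x.val + 1) (r : ℕ) (hr : y.val * (d + 2) + r + 1 ≤ n * (d + 2)) :
    ∃ v ∈ pathZone d n k (y.val * (d + 2) + r + 1), v (some x) = v (some y) + (k x.val : ℕ) := by
  have e : y.val * (d + 2) = x.val * (d + 2) + d + 2 := by rw [hxy]; ring
  have hb0 : ¬ viaAcc d k (y.val * (d + 2)) := fun h => by
    have := (viaAcc_iff k y.val (by omega : 0 < d + 2)).1 h
    omega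
  induction r with
  | zero =>
    obtain ⟨v, hv, hvx⟩ := run_block (k := k) x (by have := y.2; omega) d le_rfl
    rw [← e] at hv
    have hre := (run_exists (d := d) (n := n) k (y.val * (d + 2)) (by omega)).2
    have h1 := path_step (δ := 0) (by omega) hv (fun h => absurd h hb0) hre
    refine ⟨_, h1.1, ?_⟩
    rw [resetVal_mem ((some_mem_pathReset y).2 rfl),
      resetVal_notMem (fun h => by have := (some_mem_pathReset _).1 h; omega)]
    simp only [ClockVal.add]
    rw [hvx, min_eq_right (hk _)]
    simp
  | succ r ih =>
    obtain ⟨v, hv, hvx⟩ := ih (by omega)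
    have hre := (run_exists (d := d) (n := n) k (y.val * (d + 2) + r + 1) (by omega)).2
    have h1 := path_step (δ := 1) (by omega) hv (fun _ => le_add_self) hre
    refine ⟨_, h1.1, ?_⟩
    rw [resetVal_notMem (fun h => by have := (some_mem_pathReset _).1 h; omega),
      resetVal_notMem (fun h => by have := (some_mem_pathReset _).1 h; omega)]
    simp only [ClockVal.add]
    rw [hvx]
    ring

lemma pathZone_le {d n : ℕ} (hd : 1 ≤ d) {k k' : ℕ → ℕ} (hk : ∀ i, k i ≤ d) (hk' : ∀ i, k' i ≤ d)
    (h : pathZone d n k (n * (d + 2)) = pathZone d n k' (n * (d + 2))) (i : ℕ) (hi : i < n - 1) :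
    k' i ≤ k i := by
  by_contra hlt
  have hle : (i + 1) * (d + 2) + (d + 2) ≤ n * (d + 2) := by
    rw [← Nat.succ_mul]; exact Nat.mul_le_mul_right _ (by omega)
  obtain ⟨r, hr⟩ : ∃ r, n * (d + 2) = (i + 1) * (d + 2) + r + 1 :=
    ⟨n * (d + 2) - (i + 1) * (d + 2) - 1, by omega⟩
  let x : Fin (n + 1) := ⟨i, by omega⟩
  let y : Fin (n + 1) := ⟨i + 1, by omega⟩
  obtain ⟨v, hv, hvx⟩ := run_final hk x y rfl r hr.ge
  have hv' : v ∈ pathZone d n k' (y.val * (d + 2) + r + 1) := by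
    have h' := h
    rw [hr] at h'
    exact h' ▸ hv
  have := gapSet_lt (m := k i) (by simpa [x] using hlt) (hk' _)
    (final_lower hd hk' x y rfl r hv')
  rw [hvx] at this
  push_cast at this
  simp [x] at this

/-- for every `d ≥ 1` there is `c` such that for every `n ≥ 2`
there is a TBA `A` with `n+1` clocks and maximal constant `d` whose zone graph
has at most `c·n` reachable nodes, while the zone graph of `SNZ(A)` has at
least `(d+1)^(n-1)` reachable nodes. -/
theorem snz_exponential_blowup :
    ∀ d : ℕ, 1 ≤ d → ∃ c : ℕ, ∀ n : ℕ, 2 ≤ n →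
      ∃ (Q : Type) (A : TBA Q (Fin (n + 1))),
        A.IsMaxConst d ∧ (SNZ A).IsMaxConst d ∧
        (ZGReach A d).Finite ∧ (ZGReach A d).ncard ≤ c * n ∧
        ((d + 1) ^ (n - 1) ≤ (ZGReach (SNZ A) d).ncard ∨ (ZGReach (SNZ A) d).Infinite) := by
  intro d hd
  refine ⟨d + 3, fun n hn => ⟨_, chain d n, chain_isMaxConst d n,
    isMaxConst_SNZ _ hd (chain_isMaxConst d n), (Finset.finite_toSet _).subset chain_reach, ?_, ?_⟩⟩
  · calc (ZGReach (chain d n) d).ncard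
        ≤ _ := Set.ncard_le_ncard chain_reach (Finset.finite_toSet _)
      _ ≤ n * (d + 2) + 2 := by
        rw [Set.ncard_coe_finset]
        exact Finset.card_image_le.trans (by simp)
      _ ≤ (d + 3) * n := by nlinarith
  · by_cases hfin : (ZGReach (SNZ (chain d n)) d).Finite
    · left
      let toSeq : (Fin (n - 1) → Fin (d + 1)) → ℕ → ℕ :=
        fun f i => if h : i < n - 1 then (f ⟨i, h⟩).val else 0
      have hseq : ∀ f i, toSeq f i ≤ d := by
        intro f i
        simp only [toSeq]
        split_ifs with h
        · have := (f ⟨i, h⟩).2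
          omega
        · omega
      let F : (Fin (n - 1) → Fin (d + 1)) →
          RNode (_ ⊕ Fin (n * (d + 2) + 1 + 1)) (Option (Fin (n + 1))) := fun f =>
        (Sum.inl (chainState d n (n * (d + 2))), pathZone d n (toSeq f) (n * (d + 2)))
      have hF : Function.Injective F := by
        intro f g hfg
        have h := congrArg Prod.snd hfg
        funext i
        have h1 := pathZone_le hd (hseq f) (hseq g) h i.val i.2
        have h2 := pathZone_le hd (hseq g) (hseq f) h.symm i.val i.2
        simp only [toSeq, i.2, dif_pos] at h1 h2
        exact Fin.ext (le_antisymm h2 h1)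
      have hsub : Set.range F ⊆ ZGReach (SNZ (chain d n)) d := by
        rintro _ ⟨f, rfl⟩
        exact (run_exists (toSeq f) _ le_rfl).2
      calc (d + 1) ^ (n - 1) = Nat.card (Fin (n - 1) → Fin (d + 1)) := by simp
        _ = (Set.range F).ncard := (Nat.card_range_of_injective hF).symm
        _ ≤ _ := Set.ncard_le_ncard hsub hfin
    · exact Or.inr hfin
end
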